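/- Let n, k, s, t be positive integers with n ≥ 2k², t ≥ 1, and k ≥ 5st. Then any family F of k-element subsets of [n] with matching number ν(F) ≤ s satisfies δ_t(F) ≤ C(n-t, k-t) - C(n-s-t, k-t). -/

import Mathlib

/-- Averaging over random matchings: if every system of pairwise disjoint `m`-subsets of `W`
satisfies a linear inequality, so does the average. -/
lemma avg_lemma {ι : Type*} [DecidableEq ι] (m : ℕ) (I : Finset ι) :
    ∀ (W : Finset ℕ) (c : ℤ) (g : ι → Finset ℕ → ℤ), I.card * m ≤ W.card →
    (∀ D : ι → Finset ℕ, (∀ i ∈ I, D i ∈ W.powersetCard m) →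
      (∀ i ∈ I, ∀ j ∈ I, i ≠ j → Disjoint (D i) (D j)) → c ≤ ∑ i ∈ I, g i (D i)) →
    c * (W.card.choose m : ℤ) ≤ ∑ i ∈ I, ∑ D ∈ W.powersetCard m, g i D := by
  induction I using Finset.induction_on with
  | empty =>
    intro W c g _ h
    have h0 := h (fun _ => ∅) (by simp) (by simp)
    simp at h0 ⊢
    exact mul_nonpos_of_nonpos_of_nonneg h0 (by positivity)
  | insert a I ha ih =>
    intro W c g hc h
    rcases I.eq_empty_or_nonempty with rfl | hne
    · simp only [insert_empty_eq, Finset.sum_singleton]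
      have : ∑ D ∈ W.powersetCard m, c ≤ ∑ D ∈ W.powersetCard m, g a D := by
        apply Finset.sum_le_sum
        intro D hD
        have := h (fun _ => D) (by simpa using hD) (by simp)
        simpa using this
      rw [Finset.sum_const, Finset.card_powersetCard, nsmul_eq_mul] at this
      linarith
    · rw [Finset.card_insert_of_notMem ha] at hc
      have hI1 : 1 ≤ I.card := hne.card_pos
      have hWm : m ≤ W.card - m := by
        have : 1 * m ≤ I.card * m := Nat.mul_le_mul_right _ hI1
        have : (I.card + 1) * m = I.card * m + m := by ring
        omega
      set K : ℤ := ((W.card - m).choose m : ℤ) with hK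
      have hKpos : 0 < K := by
        rw [hK]; exact_mod_cast Nat.choose_pos hWm
      have key : ∀ E ∈ W.powersetCard m,
          c * K ≤ K * g a E + ∑ i ∈ I, ∑ D ∈ (W \ E).powersetCard m, g i D := by
        intro E hE
        have hE' := Finset.mem_powersetCard.1 hE
        have hcard : (W \ E).card = W.card - m := by
          rw [Finset.card_sdiff_of_subset hE'.1, hE'.2]
        have := ih (W \ E) (c - g a E) g (by
          rw [hcard]
          have : (I.card + 1) * m = I.card * m + m := by ring
          omega) (by
          intro D hD hdis
          have := h (Function.update D a E) (by
            intro i hi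
            by_cases hia : i = a
            · subst hia; simpa using hE
            · rw [Function.update_of_ne hia]
              have := Finset.mem_powersetCard.1 (hD i ((Finset.mem_insert.1 hi).resolve_left hia))
              exact Finset.mem_powersetCard.2 ⟨this.1.trans Finset.sdiff_subset, this.2⟩) (by
            have haux : ∀ i ∈ I, Disjoint E (D i) := by
              intro i hi
              have := Finset.mem_powersetCard.1 (hD i hi)
              exact (Finset.disjoint_sdiff).mono_right this.1
            intro i hi j hj hij
            by_cases hia : i = a
            · subst hia
              have hji : j ≠ i := fun h => hij h.symm
              rw [Function.update_self, Function.update_of_ne hji]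
              exact haux j ((Finset.mem_insert.1 hj).resolve_left hji)
            · by_cases hja : j = a
              · subst hja
                rw [Function.update_self, Function.update_of_ne hia]
                exact (haux i ((Finset.mem_insert.1 hi).resolve_left hia)).symm
              · rw [Function.update_of_ne hia, Function.update_of_ne hja]
                exact hdis i ((Finset.mem_insert.1 hi).resolve_left hia) j
                  ((Finset.mem_insert.1 hj).resolve_left hja) hij)
          rw [Finset.sum_insert ha, Function.update_self] at this
          have h2 : ∑ i ∈ I, g i (Function.update D a E i) = ∑ i ∈ I, g i (D i) := by
            apply Finset.sum_congr rfl
            intro i hi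
            rw [Function.update_of_ne (fun h' : i = a => ha (h' ▸ hi))]
          rw [h2] at this
          linarith)
        rw [hcard, ← hK] at this
        linarith [sub_mul c (g a E) K, mul_comm (g a E) K]
      have hsum := Finset.sum_le_sum key
      rw [Finset.sum_const, Finset.card_powersetCard, nsmul_eq_mul, Finset.sum_add_distrib,
        ← Finset.mul_sum, Finset.sum_comm] at hsum
      have hswap : ∀ i ∈ I, ∑ E ∈ W.powersetCard m, ∑ D ∈ (W \ E).powersetCard m, g i D
          = K * ∑ D ∈ W.powersetCard m, g i D := by
        intro i _
        rw [Finset.sum_comm' (t' := W.powersetCard m) (s' := fun D => (W \ D).powersetCard m)]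
        · rw [Finset.mul_sum]
          apply Finset.sum_congr rfl
          intro D hD
          have hD' := Finset.mem_powersetCard.1 hD
          rw [Finset.sum_const, Finset.card_powersetCard, Finset.card_sdiff_of_subset hD'.1, hD'.2,
            nsmul_eq_mul]
        · intro E D
          simp only [Finset.mem_powersetCard, Finset.subset_sdiff]
          constructor
          · rintro ⟨⟨h1, h2⟩, ⟨h3, h4⟩, h5⟩
            exact ⟨⟨⟨h1, h4.symm⟩, h2⟩, h3, h5⟩
          · rintro ⟨⟨⟨h1, h4⟩, h2⟩, h3, h5⟩
            exact ⟨⟨h1, h2⟩, ⟨h3, h4.symm⟩, h5⟩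
      rw [Finset.sum_congr rfl hswap, ← Finset.mul_sum, ← mul_add] at hsum
      rw [Finset.sum_insert ha]
      have : K * (c * (W.card.choose m : ℤ)) ≤ K * (∑ D ∈ W.powersetCard m, g a D +
          ∑ i ∈ I, ∑ D ∈ W.powersetCard m, g i D) := by
        linarith [mul_comm K (c * (W.card.choose m : ℤ)), mul_comm (W.card.choose m : ℤ) (c * K),
          mul_assoc c (W.card.choose m : ℤ) K, mul_assoc c K (W.card.choose m : ℤ), mul_comm K (W.card.choose m : ℤ)]
      exact le_of_mul_le_mul_left this hKpos

/-- The matching number of `F` is at most `s` (matchings are indexed by finsets of naturals). -/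
def NoM (F : Finset (Finset ℕ)) (s : ℕ) : Prop :=
  ∀ (I : Finset ℕ) (f : ℕ → Finset ℕ), (∀ i ∈ I, f i ∈ F) →
    (∀ i ∈ I, ∀ j ∈ I, i ≠ j → Disjoint (f i) (f j)) → I.card ≤ s

/-- Replace `j` by `i`. -/
def sh (i j : ℕ) (A : Finset ℕ) : Finset ℕ :=
  if j ∈ A ∧ i ∉ A then insert i (A.erase j) else A

/-- The shift map of a family. -/
def shm (i j : ℕ) (F : Finset (Finset ℕ)) (A : Finset ℕ) : Finset ℕ :=
  if sh i j A ∈ F then A else sh i j A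

/-- The shifted family. -/
def shF (i j : ℕ) (F : Finset (Finset ℕ)) : Finset (Finset ℕ) := F.image (shm i j F)

lemma sh_inj {i j : ℕ} {A B : Finset ℕ} (hA : j ∈ A ∧ i ∉ A) (hB : j ∈ B ∧ i ∉ B)
    (h : sh i j A = sh i j B) : A = B := by
  rw [sh, sh, if_pos hA, if_pos hB] at h
  ext x
  have hx := Finset.ext_iff.1 h x
  simp only [Finset.mem_insert, Finset.mem_erase] at hx
  by_cases hxi : x = i
  · subst hxi; simp [hA.2, hB.2]
  · by_cases hxj : x = j
    · subst hxj; simp [hA.1, hB.1]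
    · simpa [hxi, hxj] using hx

lemma sh_notMem {i j : ℕ} {F : Finset (Finset ℕ)} {A : Finset ℕ} (hA : A ∈ F)
    (h : sh i j A ∉ F) : j ∈ A ∧ i ∉ A := by
  by_contra hc
  rw [sh, if_neg hc] at h
  exact h hA

lemma shm_injOn (i j : ℕ) (F : Finset (Finset ℕ)) : Set.InjOn (shm i j F) F := by
  intro A hA B hB h
  have hA' : A ∈ F := hA
  have hB' : B ∈ F := hB
  unfold shm at h
  split_ifs at h with h1 h2 h2
  · exact h
  · exact absurd (h ▸ hA') h2
  · exact absurd (h ▸ hB') h1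
  · exact sh_inj (sh_notMem hA' h1) (sh_notMem hB' h2) h

lemma card_shF (i j : ℕ) (F : Finset (Finset ℕ)) : (shF i j F).card = F.card :=
  Finset.card_image_of_injOn (shm_injOn i j F)

lemma mem_shF {i j : ℕ} {F : Finset (Finset ℕ)} {B : Finset ℕ} :
    B ∈ shF i j F ↔ (B ∈ F ∧ sh i j B ∈ F) ∨
      (B ∉ F ∧ ∃ A ∈ F, j ∈ A ∧ i ∉ A ∧ B = insert i (A.erase j)) := by
  unfold shF
  rw [Finset.mem_image]
  constructor
  · rintro ⟨A, hA, rfl⟩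
    unfold shm
    split_ifs with h
    · exact Or.inl ⟨hA, h⟩
    · have h' := sh_notMem hA h
      refine Or.inr ⟨h, A, hA, h'.1, h'.2, ?_⟩
      rw [sh, if_pos h']
  · rintro (⟨h1, h2⟩ | ⟨h1, A, hA, hj, hi, rfl⟩)
    · exact ⟨B, h1, by rw [shm, if_pos h2]⟩
    · refine ⟨A, hA, ?_⟩
      have : sh i j A = insert i (A.erase j) := by rw [sh, if_pos ⟨hj, hi⟩]
      rw [shm, this, if_neg h1]

lemma sh_sum_lt {i j : ℕ} (hij : i < j) {A : Finset ℕ} (h : j ∈ A ∧ i ∉ A) :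
    ∑ x ∈ sh i j A, x < ∑ x ∈ A, x := by
  rw [sh, if_pos h, Finset.sum_insert (by simp [h.2]), ← Finset.add_sum_erase A (fun x => x) h.1]
  omega

lemma shF_potential {i j : ℕ} (hij : i < j) {F : Finset (Finset ℕ)} {A : Finset ℕ}
    (hA : A ∈ F) (hs : sh i j A ∉ F) :
    ∑ B ∈ shF i j F, ∑ x ∈ B, x < ∑ B ∈ F, ∑ x ∈ B, x := by
  unfold shF
  rw [Finset.sum_image (shm_injOn i j F)]
  apply Finset.sum_lt_sum
  · intro B hB
    unfold shm
    split_ifs with h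
    · exact le_rfl
    · exact (sh_sum_lt hij (sh_notMem hB h)).le
  · refine ⟨A, hA, ?_⟩
    rw [shm, if_neg hs]
    exact sh_sum_lt hij (sh_notMem hA hs)

lemma shF_subset {i j n k : ℕ} (hi : i < n) {F : Finset (Finset ℕ)}
    (hF : F ⊆ (Finset.range n).powersetCard k) : shF i j F ⊆ (Finset.range n).powersetCard k := by
  intro B hB
  rcases mem_shF.1 hB with ⟨h, _⟩ | ⟨_, A, hA, hj, hiA, rfl⟩
  · exact hF h
  · have := Finset.mem_powersetCard.1 (hF hA)
    rw [Finset.mem_powersetCard]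
    constructor
    · intro x hx
      rcases Finset.mem_insert.1 hx with rfl | hx
      · simpa using hi
      · exact this.1 (Finset.mem_of_mem_erase hx)
    · rw [Finset.card_insert_of_notMem (by simp [hiA]), Finset.card_erase_of_mem hj, this.2]
      have : 0 < A.card := Finset.card_pos.2 ⟨j, hj⟩
      omega

lemma map_swap_of_mem {i j : ℕ} {A : Finset ℕ} (hj : j ∈ A) (hi : i ∉ A) :
    A.map (Equiv.swap i j).toEmbedding = insert i (A.erase j) := by
  ext x
  rw [Finset.mem_map_equiv, Equiv.symm_swap]
  have hne : i ≠ j := fun h => hi (h ▸ hj)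
  by_cases hxi : x = i
  · subst hxi; simp [hj]
  · by_cases hxj : x = j
    · subst hxj; simp [hi, hxi]
    · rw [Equiv.swap_apply_of_ne_of_ne hxi hxj]; simp [hxi, hxj]

lemma map_swap_of_notMem {i j : ℕ} {A : Finset ℕ} (hj : j ∉ A) (hi : i ∉ A) :
    A.map (Equiv.swap i j).toEmbedding = A := by
  ext x
  rw [Finset.mem_map_equiv, Equiv.symm_swap]
  by_cases hxi : x = i
  · subst hxi; simp [hj, hi]
  · by_cases hxj : x = j
    · subst hxj; simp [hi, hj]
    · rw [Equiv.swap_apply_of_ne_of_ne hxi hxj]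

lemma NoM_shF {i j s : ℕ} {F : Finset (Finset ℕ)} (h : NoM F s) : NoM (shF i j F) s := by
  intro I f hf hdis
  by_cases hall : ∀ l ∈ I, f l ∈ F
  · exact h I f hall hdis
  · push Not at hall
    obtain ⟨l0, hl0, hl0F⟩ := hall
    obtain ⟨A, hA, hjA, hiA, hfA⟩ : ∃ A ∈ F, j ∈ A ∧ i ∉ A ∧ f l0 = insert i (A.erase j) := by
      rcases mem_shF.1 (hf l0 hl0) with h' | h'
      · exact absurd h'.1 hl0F
      · exact h'.2
    have hil0 : i ∈ f l0 := by rw [hfA]; simp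
    have hne : i ≠ j := fun h => hiA (h ▸ hjA)
    refine h I (fun l => (f l).map (Equiv.swap i j).toEmbedding) ?_ ?_
    · intro l hl
      by_cases hll : l = l0
      · subst hll
        have : (f l).map (Equiv.swap i j).toEmbedding = A := by
          rw [hfA, Equiv.swap_comm, map_swap_of_mem (by simp) (by simp [hne.symm])]
          ext x
          by_cases hxi : x = i
          · subst hxi; simp [hiA, hne]
          · by_cases hxj : x = j
            · subst hxj; simp [hjA]
            · simp [hxi, hxj]
        simpa only [this] using hA
      · have hi : i ∉ f l := fun hi' => Finset.disjoint_left.1 (hdis l hl l0 hl0 hll) hi' hil0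
        have hmem : f l ∈ F ∧ sh i j (f l) ∈ F := by
          rcases mem_shF.1 (hf l hl) with h' | ⟨_, B, _, _, _, hB⟩
          · exact h'
          · exact absurd (by rw [hB]; simp) hi
        by_cases hj : j ∈ f l
        · have := hmem.2
          rw [sh, if_pos ⟨hj, hi⟩] at this
          simpa only [map_swap_of_mem hj hi] using this
        · simpa only [map_swap_of_notMem hj hi] using hmem.1
    · intro a ha b hb hab
      exact (Finset.disjoint_map _).2 (hdis a ha b hb hab)

lemma shadow_small (s a b k : ℕ) (hk : 1 ≤ k) (G : Finset (Finset ℕ))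
    (hG : ∀ A ∈ G, A ⊆ Finset.Ico a b ∧ A.card = k) (hb : b - a < (s + 1) * k) :
    G.card ≤ s * G.shadow.card := by
  have h := Finset.card_mul_le_card_mul (s := G) (t := G.shadow) (m := k) (n := s * k)
    (fun A D => D ⊆ A) (by
      intro A hA
      have : A.image (fun x => A.erase x) ⊆ G.shadow.bipartiteAbove (fun A D => D ⊆ A) A := by
        intro D hD
        obtain ⟨x, hx, rfl⟩ := Finset.mem_image.1 hD
        rw [Finset.mem_bipartiteAbove]
        exact ⟨Finset.mem_shadow_iff.2 ⟨A, hA, x, hx, rfl⟩, Finset.erase_subset _ _⟩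
      have h2 := Finset.card_le_card this
      rw [Finset.card_image_of_injOn A.erase_injOn, (hG A hA).2] at h2
      exact h2) (by
      intro D hD
      obtain ⟨A, hA, x, hx, rfl⟩ := Finset.mem_shadow_iff.1 hD
      set D := A.erase x with hDdef
      have hDc : D.card = k - 1 := by rw [Finset.card_erase_of_mem hx, (hG A hA).2]
      have hDs : D ⊆ Finset.Ico a b := (Finset.erase_subset _ _).trans (hG A hA).1
      have : G.bipartiteBelow (fun A D => D ⊆ A) D ⊆
          (Finset.Ico a b \ D).image (fun y => insert y D) := by
        intro B hB
        rw [Finset.mem_bipartiteBelow] at hB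
        have hBD : (B \ D).card = 1 := by
          rw [Finset.card_sdiff_of_subset hB.2, (hG B hB.1).2, hDc]; omega
        obtain ⟨y, hy⟩ := Finset.card_eq_one.1 hBD
        have hy' : y ∈ B \ D := by rw [hy]; simp
        rw [Finset.mem_sdiff] at hy'
        refine Finset.mem_image.2 ⟨y, Finset.mem_sdiff.2 ⟨(hG B hB.1).1 hy'.1, hy'.2⟩, ?_⟩
        rw [Finset.insert_eq, ← hy, Finset.sdiff_union_of_subset hB.2]
      have h2 := (Finset.card_le_card this).trans Finset.card_image_le
      rw [Finset.card_sdiff_of_subset hDs, hDc, Nat.card_Ico] at h2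
      have : (s + 1) * k = s * k + k := by ring
      omega)
  have h3 : G.card * k ≤ (s * G.shadow.card) * k := by
    calc _ ≤ _ := h
      _ = _ := by ring
  exact Nat.le_of_mul_le_mul_right h3 hk

lemma shadow_bound (s a : ℕ) : ∀ (b k : ℕ) (G : Finset (Finset ℕ)),
    (∀ A ∈ G, A ⊆ Finset.Ico a b ∧ A.card = k) →
    (∀ A ∈ G, ∀ i j, a ≤ i → i < j → j ∈ A → i ∉ A → insert i (A.erase j) ∈ G) →
    NoM G s → G.card ≤ s * G.shadow.card := by
  intro b
  induction b with
  | zero =>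
    intro k G hG hsh hno
    rcases Nat.eq_zero_or_pos k with rfl | hk
    · rcases G.eq_empty_or_nonempty with rfl | ⟨A, hA⟩
      · simp
      · exfalso
        have hA0 : A = ∅ := Finset.card_eq_zero.1 (hG A hA).2
        have := hno (Finset.range (s + 1)) (fun _ => ∅) (by simp [← hA0, hA]) (by simp)
        simp at this
    · exact shadow_small s a 0 k hk G hG (by
        have : 0 < (s + 1) * k := by positivity
        omega)
  | succ b ih =>
    intro k G hG hsh hno
    rcases Nat.eq_zero_or_pos k with rfl | hk
    · rcases G.eq_empty_or_nonempty with rfl | ⟨A, hA⟩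
      · simp
      · exfalso
        have hA0 : A = ∅ := Finset.card_eq_zero.1 (hG A hA).2
        have := hno (Finset.range (s + 1)) (fun _ => ∅) (by simp [← hA0, hA]) (by simp)
        simp at this
    by_cases hb : b + 1 - a < (s + 1) * k
    · exact shadow_small s a (b + 1) k hk G hG hb
    push Not at hb
    have hab : a ≤ b := by
      have : 0 < (s + 1) * k := by positivity
      omega
    set G0 := G.filter (fun A => b ∉ A) with hG0
    set G1 := (G.filter (fun A => b ∈ A)).image (fun A => A.erase b) with hG1
    have hG1mem : ∀ D, D ∈ G1 → b ∉ D ∧ insert b D ∈ G := by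
      intro D hD
      obtain ⟨A, hA, rfl⟩ := Finset.mem_image.1 hD
      rw [Finset.mem_filter] at hA
      refine ⟨by simp, ?_⟩
      rw [Finset.insert_erase hA.2]; exact hA.1
    have hG1mem' : ∀ D, b ∉ D → insert b D ∈ G → D ∈ G1 := by
      intro D hD h
      refine Finset.mem_image.2 ⟨insert b D, Finset.mem_filter.2 ⟨h, by simp⟩, ?_⟩
      exact Finset.erase_insert hD
    have hcard : G.card = G0.card + G1.card := by
      rw [hG1, Finset.card_image_of_injOn]
      · rw [hG0, add_comm]
        exact (Finset.card_filter_add_card_filter_not (s := G) (fun A => b ∈ A)).symm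
      · intro A hA B hB h
        have hA' := (Finset.mem_filter.1 hA).2
        have hB' := (Finset.mem_filter.1 hB).2
        have : insert b (A.erase b) = insert b (B.erase b) := by
          simp only at h; rw [h]
        rwa [Finset.insert_erase hA', Finset.insert_erase hB'] at this
    have h0 : G0.card ≤ s * G0.shadow.card := by
      apply ih k G0
      · intro A hA
        rw [Finset.mem_filter] at hA
        refine ⟨?_, (hG A hA.1).2⟩
        intro x hx
        have := (hG A hA.1).1 hx
        have hxb : x ≠ b := fun h => hA.2 (h ▸ hx)
        simp only [Finset.mem_Ico] at this ⊢
        omega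
      · intro A hA i j hai hij hj hi
        rw [Finset.mem_filter] at hA ⊢
        refine ⟨hsh A hA.1 i j hai hij hj hi, ?_⟩
        have hjb := (hG A hA.1).1 hj
        simp only [Finset.mem_Ico] at hjb
        intro hb'
        rcases Finset.mem_insert.1 hb' with h | h
        · omega
        · exact hA.2 (Finset.mem_of_mem_erase h)
      · intro I f hf
        exact hno I f (fun i hi => (Finset.mem_filter.1 (hf i hi)).1)
    have hG1s : ∀ A ∈ G1, A ⊆ Finset.Ico a b ∧ A.card = k - 1 := by
      intro D hD
      obtain ⟨hbD, hins⟩ := hG1mem D hD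
      have := hG _ hins
      constructor
      · intro x hx
        have h1 := this.1 (Finset.mem_insert_of_mem hx)
        have hxb : x ≠ b := fun h => hbD (h ▸ hx)
        simp only [Finset.mem_Ico] at h1 ⊢
        omega
      · have h2 := this.2
        rw [Finset.card_insert_of_notMem hbD] at h2
        omega
    have h1 : G1.card ≤ s * G1.shadow.card := by
      apply ih (k - 1) G1 hG1s
      · intro D hD i j hai hij hj hi
        obtain ⟨hbD, hins⟩ := hG1mem D hD
        have hjb := (hG1s D hD).1 hj
        simp only [Finset.mem_Ico] at hjb
        apply hG1mem'
        · intro hb'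
          rcases Finset.mem_insert.1 hb' with h | h
          · omega
          · exact hbD (Finset.mem_of_mem_erase h)
        · have := hsh _ hins i j hai hij (Finset.mem_insert_of_mem hj) (by
            intro h
            rcases Finset.mem_insert.1 h with h | h
            · omega
            · exact hi h)
          rw [Finset.erase_insert_of_ne (by omega), Finset.insert_comm] at this
          exact this
      · intro I f hf hdis
        by_contra hI
        push Not at hI
        obtain ⟨J, hJI, hJ⟩ := Finset.exists_subset_card_eq (show s + 1 ≤ I.card from hI)
        set V := J.biUnion f with hV
        have hVc : V.card ≤ (s + 1) * (k - 1) := by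
          rw [← hJ]
          exact Finset.card_biUnion_le_card_mul _ _ _ (fun i hi => (hG1s _ (hf i (hJI hi))).2.le)
        have hfree : s + 1 ≤ (Finset.Ico a (b + 1) \ V).card := by
          have h3 := Finset.le_card_sdiff V (Finset.Ico a (b + 1))
          rw [Nat.card_Ico] at h3
          have : (s + 1) * k = (s + 1) * (k - 1) + (s + 1) := by
            obtain ⟨k', rfl⟩ : ∃ k', k = k' + 1 := ⟨k - 1, by omega⟩
            simp; ring
          omega
        obtain ⟨φ, hφ, hφinj⟩ : ∃ φ : ℕ → ℕ, (∀ i ∈ J, φ i ∈ Finset.Ico a (b + 1) \ V) ∧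
            Set.InjOn φ J := by
          have := Finset.exists_subset_card_eq hfree
          obtain ⟨E, hE, hEc⟩ := this
          obtain ⟨e⟩ : Nonempty (J ≃ E) := ⟨Finset.equivOfCardEq (by rw [hJ, hEc])⟩
          refine ⟨fun i => if h : i ∈ J then e ⟨i, h⟩ else 0, ?_, ?_⟩
          · intro i hi
            simp only [hi, dif_pos]
            exact hE (e ⟨i, hi⟩).2
          · intro i hi j hj h
            have hi' : i ∈ J := hi
            have hj' : j ∈ J := hj
            simp only [hi', hj', dif_pos] at h
            have := e.injective (Subtype.ext h)
            simpa using this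
        have hnV : ∀ i ∈ J, ∀ j ∈ J, φ i ∉ f j := by
          intro i hi j hj h
          exact (Finset.mem_sdiff.1 (hφ i hi)).2 (Finset.mem_biUnion.2 ⟨j, hj, h⟩)
        have := hno J (fun i => insert (φ i) (f i)) (by
          intro i hi
          obtain ⟨hbD, hins⟩ := hG1mem _ (hf i (hJI hi))
          by_cases hib : φ i = b
          · simpa only [hib] using hins
          · have hm := (Finset.mem_sdiff.1 (hφ i hi)).1
            rw [Finset.mem_Ico] at hm
            have h4 := hsh _ hins (φ i) b hm.1 (by omega) (by simp) (by
              intro h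
              rcases Finset.mem_insert.1 h with h | h
              · exact hib h
              · exact hnV i hi i hi h)
            rwa [Finset.erase_insert hbD] at h4) (by
          intro i hi j hj hij
          rw [Finset.disjoint_insert_left, Finset.disjoint_insert_right]
          refine ⟨?_, hnV j hj i hi, hdis i (hJI hi) j (hJI hj) hij⟩
          intro h
          rcases Finset.mem_insert.1 h with h | h
          · exact hij (hφinj hi hj h)
          · exact hnV i hi j hj h)
        omega
    have hsh2 : G0.shadow.card + G1.shadow.card ≤ G.shadow.card := by
      have hinj : Set.InjOn (fun D : Finset ℕ => insert b D) G1.shadow := by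
        intro D hD E hE h
        have hb1 : ∀ D ∈ G1.shadow, b ∉ D := by
          intro D hD
          obtain ⟨A, hA, x, hx, rfl⟩ := Finset.mem_shadow_iff.1 hD
          exact fun h => (hG1mem A hA).1 (Finset.mem_of_mem_erase h)
        have : (insert b D).erase b = (insert b E).erase b := by
          simp only at h; rw [h]
        rwa [Finset.erase_insert (hb1 D hD), Finset.erase_insert (hb1 E hE)] at this
      rw [← Finset.card_image_of_injOn hinj, ← Finset.card_union_of_disjoint]
      · apply Finset.card_le_card
        intro D hD
        rcases Finset.mem_union.1 hD with h | h
        · obtain ⟨A, hA, x, hx, rfl⟩ := Finset.mem_shadow_iff.1 h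
          exact Finset.mem_shadow_iff.2 ⟨A, (Finset.mem_filter.1 hA).1, x, hx, rfl⟩
        · obtain ⟨E, hE, rfl⟩ := Finset.mem_image.1 h
          obtain ⟨A, hA, x, hx, rfl⟩ := Finset.mem_shadow_iff.1 hE
          refine Finset.mem_shadow_iff.2 ⟨insert b A, (hG1mem A hA).2, x,
            Finset.mem_insert_of_mem hx, ?_⟩
          have : b ≠ x := fun h => (hG1mem A hA).1 (h ▸ hx)
          rw [Finset.erase_insert_of_ne this]
      · rw [Finset.disjoint_left]
        intro D hD hD'
        obtain ⟨A, hA, x, hx, rfl⟩ := Finset.mem_shadow_iff.1 hD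
        obtain ⟨E, hE, h⟩ := Finset.mem_image.1 hD'
        have : b ∈ A.erase x := by rw [← h]; simp
        exact (Finset.mem_filter.1 hA).2 (Finset.mem_of_mem_erase this)
    calc G.card = G0.card + G1.card := hcard
      _ ≤ s * G0.shadow.card + s * G1.shadow.card := by omega
      _ = s * (G0.shadow.card + G1.shadow.card) := by ring
      _ ≤ _ := Nat.mul_le_mul_left _ hsh2

lemma ext_lemma {F : Finset (Finset ℕ)} {s m : ℕ} (hno : NoM F s) (W U P : Finset ℕ)
    (g : ℕ → Finset ℕ) (hgF : ∀ p ∈ P, g p ∈ F)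
    (hgd : ∀ p ∈ P, ∀ q ∈ P, p ≠ q → Disjoint (g p) (g q))
    (hgW : ∀ p ∈ P, Disjoint (g p) W) (hgU : ∀ p ∈ P, Disjoint (g p) U)
    (hPU : Disjoint P U) (hUW : Disjoint U W) (hs : s < P.card + U.card)
    (hsize : U.card * m ≤ W.card) :
    W.card.choose m ≤ ∑ u ∈ U, ((W.powersetCard m).filter (fun D => insert u D ∉ F)).card := by
  classical
  have h := avg_lemma m U W 1 (fun u D => if insert u D ∉ F then 1 else 0) hsize (by
    intro D hD hdis
    by_contra hc
    have hall : ∀ u ∈ U, insert u (D u) ∈ F := by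
      intro u hu
      by_contra hu'
      apply hc
      have h1 : ∀ i ∈ U, (0 : ℤ) ≤ (if insert i (D i) ∉ F then 1 else 0) := by
        intro i _; split_ifs <;> simp
      have h2 := Finset.single_le_sum h1 hu
      rw [if_pos hu'] at h2
      exact h2
    have hDW : ∀ u ∈ U, D u ⊆ W := fun u hu => (Finset.mem_powersetCard.1 (hD u hu)).1
    have huD : ∀ u ∈ U, ∀ v ∈ U, u ∉ D v := fun u hu v hv h =>
      Finset.disjoint_left.1 hUW hu (hDW v hv h)
    have hPn : ∀ p ∈ P, p ∉ U := fun p hp h => Finset.disjoint_left.1 hPU hp h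
    have hmix : ∀ p ∈ P, ∀ u ∈ U, Disjoint (g p) (insert u (D u)) := by
      intro p hp u hu
      rw [Finset.disjoint_insert_right]
      exact ⟨fun h => Finset.disjoint_left.1 (hgU p hp) h hu, (hgW p hp).mono_right (hDW u hu)⟩
    have := hno (P ∪ U) (fun i => if i ∈ U then insert i (D i) else g i) (by
      intro i hi
      by_cases hiU : i ∈ U
      · simpa only [hiU, if_true] using hall i hiU
      · simp only [hiU, if_false]
        exact hgF i ((Finset.mem_union.1 hi).resolve_right hiU)) (by
      intro i hi j hj hij
      by_cases hiU : i ∈ U <;> by_cases hjU : j ∈ U <;> simp only [hiU, hjU, if_true, if_false]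
      · rw [Finset.disjoint_insert_left, Finset.disjoint_insert_right]
        refine ⟨?_, huD j hjU i hiU, hdis i hiU j hjU hij⟩
        intro h
        rcases Finset.mem_insert.1 h with h | h
        · exact hij h
        · exact huD i hiU j hjU h
      · exact (hmix j ((Finset.mem_union.1 hj).resolve_right hjU) i hiU).symm
      · exact hmix i ((Finset.mem_union.1 hi).resolve_right hiU) j hjU
      · exact hgd i ((Finset.mem_union.1 hi).resolve_right hiU) j
          ((Finset.mem_union.1 hj).resolve_right hjU) hij)
    rw [Finset.card_union_of_disjoint hPU] at this
    omega)
  simp only [one_mul, Finset.sum_boole] at h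
  exact_mod_cast h

lemma miss_lemma {F : Finset (Finset ℕ)} {n m : ℕ} (W U : Finset ℕ)
    (hW : W ⊆ Finset.range n) (hU : U ⊆ Finset.range n) (hUW : Disjoint U W) :
    ∑ u ∈ U, ((W.powersetCard m).filter (fun D => insert u D ∉ F)).card ≤
      (((Finset.range n).powersetCard (m + 1)).filter
        (fun A => ¬ Disjoint A U ∧ A ∉ F)).card := by
  classical
  have hn : ∀ u ∈ U, ∀ D ∈ W.powersetCard m, u ∉ D := fun u hu D hD h =>
    Finset.disjoint_left.1 hUW hu ((Finset.mem_powersetCard.1 hD).1 h)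
  have h1 : ∀ u ∈ U, ((W.powersetCard m).filter (fun D => insert u D ∉ F)).card =
      (((W.powersetCard m).filter (fun D => insert u D ∉ F)).image (fun D => insert u D)).card := by
    intro u hu
    rw [Finset.card_image_of_injOn]
    intro D hD E hE h
    have hD' := hn u hu D (Finset.mem_filter.1 hD).1
    have hE' := hn u hu E (Finset.mem_filter.1 hE).1
    have : (insert u D).erase u = (insert u E).erase u := by
      simp only at h; rw [h]
    rwa [Finset.erase_insert hD', Finset.erase_insert hE'] at this
  rw [Finset.sum_congr rfl h1, ← Finset.card_biUnion]
  · apply Finset.card_le_card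
    intro A hA
    obtain ⟨u, hu, hA⟩ := Finset.mem_biUnion.1 hA
    obtain ⟨D, hD, rfl⟩ := Finset.mem_image.1 hA
    rw [Finset.mem_filter] at hD
    have hD' := Finset.mem_powersetCard.1 hD.1
    rw [Finset.mem_filter, Finset.mem_powersetCard]
    refine ⟨⟨Finset.insert_subset (hU hu) (hD'.1.trans hW), ?_⟩, ?_, hD.2⟩
    · rw [Finset.card_insert_of_notMem (hn u hu D hD.1), hD'.2]
    · exact Finset.not_disjoint_iff.2 ⟨u, by simp, hu⟩
  · intro u hu v hv huv
    rw [Function.onFun, Finset.disjoint_left]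
    intro A hA hA'
    obtain ⟨D, hD, rfl⟩ := Finset.mem_image.1 hA
    obtain ⟨E, hE, h⟩ := Finset.mem_image.1 hA'
    have : v ∈ insert u D := by rw [← h]; simp
    rcases Finset.mem_insert.1 this with h | h
    · exact huv h.symm
    · exact hn v hv D (Finset.mem_filter.1 hD).1 h

lemma cross_lemma {F : Finset (Finset ℕ)} {s m x : ℕ} (hno : NoM F s) (W : Finset ℕ)
    (hW : Disjoint (Finset.range (s + 1)) W)
    (hnest : ∀ D ∈ W.powersetCard m, insert s D ∈ F → ∀ j < s, insert j D ∈ F)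
    (hx : x * m ≤ W.card) (hx0 : 0 < x) :
    ((x : ℤ) - s) * (((W.powersetCard m).filter (fun D => insert s D ∈ F)).card : ℤ) ≤
    ∑ j ∈ Finset.range s, (((W.powersetCard m).filter (fun D => insert j D ∉ F)).card : ℤ) := by
  classical
  have h := avg_lemma m (Finset.range x) W 0
    (fun _ D => ∑ j ∈ Finset.range s, (if insert j D ∉ F then (1 : ℤ) else 0) -
      ((x : ℤ) - s) * (if insert s D ∈ F then 1 else 0)) (by simpa using hx) (by
    intro D hD hdis
    rw [Finset.sum_sub_distrib, Finset.sum_comm, ← Finset.mul_sum]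
    set T : ℕ → Finset ℕ := fun j => (Finset.range x).filter (fun l => insert j (D l) ∈ F) with hT
    have hTs : ∑ l ∈ Finset.range x, (if insert s (D l) ∈ F then (1 : ℤ) else 0) = (T s).card := by
      rw [Finset.sum_boole]
    have hTj : ∀ j ∈ Finset.range s,
        ∑ l ∈ Finset.range x, (if insert j (D l) ∉ F then (1 : ℤ) else 0) = x - (T j).card := by
      intro j _
      rw [Finset.sum_boole]
      have := Finset.card_filter_add_card_filter_not (s := Finset.range x)
        (fun l => insert j (D l) ∈ F)
      rw [Finset.card_range] at this
      have h2 : ((T j).card : ℤ) + ((Finset.range x).filter (fun l => ¬ insert j (D l) ∈ F)).card = x := by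
        exact_mod_cast this
      linarith
    rw [hTs, Finset.sum_congr rfl hTj]
    have hTle : ∀ j, (T j).card ≤ x := by
      intro j
      exact (Finset.card_filter_le _ _).trans (by simp)
    have hmono : ∀ j ∈ Finset.range s, T s ⊆ T j := by
      intro j hj l hl
      rw [Finset.mem_filter] at hl ⊢
      exact ⟨hl.1, hnest _ (hD l hl.1) hl.2 j (by simpa using hj)⟩
    have hHall : ¬ ∀ J : Finset (Fin (s + 1)), J.card ≤ (J.biUnion (fun j => T j)).card := by
      intro hH
      obtain ⟨f, hfi, hf⟩ :=
        (Finset.all_card_le_biUnion_card_iff_exists_injective (fun j : Fin (s + 1) => T j)).1 hH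
      set f' : ℕ → ℕ := fun j => if h : j < s + 1 then f ⟨j, h⟩ else 0 with hf'
      have hf'm : ∀ j ∈ Finset.range (s + 1), f' j ∈ T j := by
        intro j hj
        have hj' : j < s + 1 := by simpa using hj
        simp only [hf', hj', dif_pos]
        exact hf ⟨j, hj'⟩
      have hf'r : ∀ j ∈ Finset.range (s + 1), f' j ∈ Finset.range x := fun j hj =>
        (Finset.mem_filter.1 (hf'm j hj)).1
      have hn : ∀ i ∈ Finset.range (s + 1), ∀ l ∈ Finset.range x, i ∉ D l := fun i hi l hl h =>
        Finset.disjoint_left.1 hW hi ((Finset.mem_powersetCard.1 (hD l hl)).1 h)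
      have := hno (Finset.range (s + 1)) (fun j => insert j (D (f' j)))
        (fun j hj => (Finset.mem_filter.1 (hf'm j hj)).2) (by
          intro i hi j hj hij
          have hne : f' i ≠ f' j := by
            have hi' : i < s + 1 := by simpa using hi
            have hj' : j < s + 1 := by simpa using hj
            simp only [hf', hi', hj', dif_pos]
            intro h
            exact hij (by simpa using hfi h)
          rw [Finset.disjoint_insert_left, Finset.disjoint_insert_right]
          refine ⟨?_, hn j hj _ (hf'r i hi), hdis _ (hf'r i hi) _ (hf'r j hj) hne⟩
          intro h
          rcases Finset.mem_insert.1 h with h | h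
          · exact hij h
          · exact hn i hi _ (hf'r j hj) h)
      simp at this
    push Not at hHall
    obtain ⟨J, hJ⟩ := hHall
    set q := (J.biUnion (fun j => T j)).card with hq
    have hJs : J.card ≤ s + 1 := by
      simpa using Finset.card_le_univ J
    have hJne : J.Nonempty := by
      rw [← Finset.card_pos]; omega
    have hsub : ∀ j ∈ J, (T j).card ≤ q := fun j hj =>
      Finset.card_le_card (Finset.subset_biUnion_of_mem (fun j : Fin (s + 1) => T j) hj)
    have hTsq : (T s).card ≤ q := by
      obtain ⟨j, hj⟩ := hJne
      refine le_trans (Finset.card_le_card ?_) (hsub j hj)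
      by_cases hjs : (j : ℕ) < s
      · exact hmono j (by simpa using hjs)
      · have : (j : ℕ) = s := by have := j.2; omega
        rw [this]
    by_cases hxs : x ≤ s
    · have h1 : ((x : ℤ) - s) * (T s).card ≤ 0 :=
        mul_nonpos_of_nonpos_of_nonneg (by have : (x : ℤ) ≤ s := by exact_mod_cast hxs
                                           linarith) (by positivity)
      have h2 : 0 ≤ ∑ j ∈ Finset.range s, ((x : ℤ) - (T j).card) := by
        apply Finset.sum_nonneg
        intro j _
        have : ((T j).card : ℤ) ≤ x := by exact_mod_cast hTle j
        linarith
      linarith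
    push Not at hxs
    have hxs' : (s : ℤ) < x := by exact_mod_cast hxs
    -- the members of J below s
    set J' : Finset ℕ := (J.image Fin.val).filter (fun j => j < s) with hJ'
    have hJ'c : q ≤ J'.card := by
      have h1 : (J.image Fin.val).card = J.card :=
        Finset.card_image_of_injective _ Fin.val_injective
      have h2 : J.image Fin.val ⊆ insert s J' := by
        intro j hj
        by_cases hjs : j < s
        · exact Finset.mem_insert_of_mem (Finset.mem_filter.2 ⟨hj, hjs⟩)
        · obtain ⟨i, _, rfl⟩ := Finset.mem_image.1 hj
          have : (i : ℕ) = s := by have := i.2; omega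
          rw [this]; simp
      have h3 := (Finset.card_le_card h2).trans (Finset.card_insert_le _ _)
      omega
    have hJ's : J' ⊆ Finset.range s := by
      intro j hj
      simpa using (Finset.mem_filter.1 hj).2
    have hsum : (J'.card : ℤ) * ((x : ℤ) - s) ≤ ∑ j ∈ Finset.range s, ((x : ℤ) - (T j).card) := by
      calc (J'.card : ℤ) * ((x : ℤ) - s) = ∑ j ∈ J', ((x : ℤ) - s) := by rw [Finset.sum_const, nsmul_eq_mul]
        _ ≤ ∑ j ∈ J', ((x : ℤ) - (T j).card) := by
          apply Finset.sum_le_sum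
          intro j hj
          obtain ⟨i, hi, rfl⟩ := Finset.mem_image.1 (Finset.mem_filter.1 hj).1
          have h1 := hsub i hi
          have h2 : (T i).card ≤ s := by omega
          have h3 : ((T i).card : ℤ) ≤ s := by exact_mod_cast h2
          linarith
        _ ≤ _ := by
          apply Finset.sum_le_sum_of_subset_of_nonneg hJ's
          intro j _ _
          have : ((T j).card : ℤ) ≤ x := by exact_mod_cast hTle j
          linarith
    have hfin : ((x : ℤ) - s) * (T s).card ≤ (J'.card : ℤ) * ((x : ℤ) - s) := by
      rw [mul_comm]
      apply mul_le_mul_of_nonneg_right _ (by linarith)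
      exact_mod_cast hTsq.trans hJ'c
    linarith)
  rw [zero_mul, Finset.sum_const, Finset.card_range, nsmul_eq_mul, Finset.sum_sub_distrib,
    Finset.sum_comm, ← Finset.mul_sum] at h
  simp only [Finset.sum_boole] at h
  have hx0' : (0 : ℤ) < x := by exact_mod_cast hx0
  have := nonneg_of_mul_nonneg_right h hx0'
  linarith

lemma choose_ratio (q M N : ℕ) (hN : M + q ≤ N) : ∀ m, m ≤ M →
    (1 - (q : ℝ) / (N - M + 1)) ^ m * (N.choose m : ℝ) ≤ ((N - q).choose m : ℝ) := by
  intro m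
  have hNr : (M : ℝ) + q ≤ N := by exact_mod_cast hN
  have hq0 : (0 : ℝ) ≤ q := by positivity
  have hE0 : 0 ≤ 1 - (q : ℝ) / (N - M + 1) := by
    rw [sub_nonneg, div_le_one (by linarith)]
    linarith
  induction m with
  | zero => simp
  | succ m ih =>
    intro hm
    have ih' := ih (by omega)
    have h1 : (N.choose (m + 1) : ℝ) * (m + 1) = N.choose m * (N - m) := by
      have := Nat.choose_succ_right_eq N m
      have h2 : ((N - m : ℕ) : ℝ) = N - m := by
        rw [Nat.cast_sub (by omega)]
      rw [← h2]; exact_mod_cast this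
    have h2 : ((N - q).choose (m + 1) : ℝ) * (m + 1) = (N - q).choose m * (N - q - m) := by
      have := Nat.choose_succ_right_eq (N - q) m
      have h2 : ((N - q - m : ℕ) : ℝ) = N - q - m := by
        rw [Nat.cast_sub (by omega), Nat.cast_sub (by omega)]
      rw [← h2]; exact_mod_cast this
    have hmr : (m : ℝ) + 1 ≤ M := by exact_mod_cast hm
    have h3 : (1 - (q : ℝ) / (N - M + 1)) * (N - m) ≤ N - q - m := by
      have : (q : ℝ) ≤ (q : ℝ) / (N - M + 1) * (N - m) := by
        rw [div_mul_eq_mul_div, le_div_iff₀ (by linarith)]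
        apply mul_le_mul_of_nonneg_left _ hq0
        linarith
      linarith
    set E := 1 - (q : ℝ) / (N - M + 1)
    have hpos : (0 : ℝ) < m + 1 := by positivity
    have : (E ^ (m + 1) * (N.choose (m + 1) : ℝ)) * (m + 1) ≤
        ((N - q).choose (m + 1) : ℝ) * (m + 1) := by
      rw [h2, mul_assoc, h1]
      calc E ^ (m + 1) * (N.choose m * (N - m)) = (E ^ m * N.choose m) * (E * (N - m)) := by ring
        _ ≤ ((N - q).choose m : ℝ) * (E * (N - m)) := by
          apply mul_le_mul_of_nonneg_right ih'
          exact mul_nonneg hE0 (by linarith)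
        _ ≤ _ := mul_le_mul_of_nonneg_left h3 (by positivity)
    exact le_of_mul_le_mul_right this hpos

lemma choose_ratio_exp (q m N : ℕ) (hN : m + q ≤ N) (z : ℝ)
    (hz : (q : ℝ) * m ≤ z * (N - m + 1 - q)) :
    Real.exp (-z) * (N.choose m : ℝ) ≤ ((N - q).choose m : ℝ) := by
  refine le_trans ?_ (choose_ratio q m N hN m le_rfl)
  apply mul_le_mul_of_nonneg_right _ (by positivity)
  have hNr : (m : ℝ) + q ≤ N := by exact_mod_cast hN
  have hq0 : (0 : ℝ) ≤ q := by positivity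
  set d : ℝ := N - m + 1 - q with hd
  have hd1 : 1 ≤ d := by linarith
  have hE : 1 - (q : ℝ) / (N - m + 1) = (1 + q / d)⁻¹ := by
    have : (N : ℝ) - m + 1 = d + q := by rw [hd]; ring
    rw [this]
    have h1 : d + q ≠ 0 := by positivity
    have h2 : d ≠ 0 := by positivity
    field_simp
    ring
  rw [hE, inv_pow, Real.exp_neg]
  apply inv_anti₀ (by positivity)
  calc (1 + q / d) ^ m ≤ (Real.exp (q / d)) ^ m := by
        apply pow_le_pow_left₀ (by positivity)
        rw [add_comm]; exact Real.add_one_le_exp _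
    _ = Real.exp (m * (q / d)) := by rw [← Real.exp_nat_mul]
    _ ≤ Real.exp z := by
        apply Real.exp_le_exp.2
        rw [← mul_div_assoc, div_le_iff₀ (by linarith)]
        linarith

lemma exp_half : (0.606 : ℝ) ≤ Real.exp (-(1/2)) := by
  have h := Real.exp_one_lt_d9
  have h2 : Real.exp (1/2) * Real.exp (1/2) = Real.exp 1 := by
    rw [← Real.exp_add]; norm_num
  have h3 : Real.exp (1/2) < 1.65 := by
    by_contra hc
    push Not at hc
    nlinarith
  rw [Real.exp_neg]
  rw [le_inv_comm₀ (by norm_num) (Real.exp_pos _)]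
  exact h3.le.trans (by norm_num)

lemma num_P1 {n k s : ℕ} (hs : 1 ≤ s) (hk : 5 * s ≤ k) (hn : 2 * k ^ 2 ≤ n) :
    606 * (n - s - 1).choose (k - 1) ≤ 1000 * (n - s - k).choose (k - 1) := by
  have hk5 : 5 ≤ k := by omega
  have hnk : 10 * k ≤ n := by nlinarith
  have h := choose_ratio_exp (k - 1) (k - 1) (n - s - 1) (by omega) (1/2) (by
    have hn' : 2 * (k : ℝ) ^ 2 ≤ n := by exact_mod_cast hn
    have hk' : 5 * (s : ℝ) ≤ k := by exact_mod_cast hk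
    have hs' : 1 ≤ (s : ℝ) := by exact_mod_cast hs
    rw [Nat.cast_sub (by omega), Nat.cast_sub (by omega), Nat.cast_sub (by omega)]
    push_cast
    nlinarith)
  have e : n - s - 1 - (k - 1) = n - s - k := by omega
  rw [e] at h
  have h2 : (0.606 : ℝ) * ((n - s - 1).choose (k - 1) : ℝ) ≤ ((n - s - k).choose (k - 1) : ℝ) :=
    le_trans (mul_le_mul_of_nonneg_right exp_half (by positivity)) h
  have h3 : (606 : ℝ) * ((n - s - 1).choose (k - 1) : ℝ) ≤ 1000 * ((n - s - k).choose (k - 1) : ℝ) := by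
    linarith
  exact_mod_cast h3

lemma num_P2 {n k s : ℕ} (hs : 1 ≤ s) (hk : 5 * s ≤ k) (hn : 2 * k ^ 2 ≤ n) :
    22 * (n - s - 1).choose (k - 1) ≤ 100 * (n - s + 1 - 2 * k).choose (k - 1) := by
  have hk5 : 5 ≤ k := by omega
  have hnk : 10 * k ≤ n := by nlinarith
  have h := choose_ratio_exp (2 * (k - 1)) (k - 1) (n - s - 1) (by omega) (3/2) (by
    have hn' : 2 * (k : ℝ) ^ 2 ≤ n := by exact_mod_cast hn
    have hk' : 5 * (s : ℝ) ≤ k := by exact_mod_cast hk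
    have hk5' : 5 ≤ (k : ℝ) := by exact_mod_cast hk5
    have hs' : 1 ≤ (s : ℝ) := by exact_mod_cast hs
    rw [Nat.cast_mul, Nat.cast_sub (by omega), Nat.cast_sub (by omega), Nat.cast_sub (by omega)]
    push_cast
    nlinarith)
  have e : n - s - 1 - 2 * (k - 1) = n - s + 1 - 2 * k := by omega
  rw [e] at h
  have h1 : (0.22 : ℝ) ≤ Real.exp (-(3/2)) := by
    have e2 : Real.exp (-(3/2)) = Real.exp (-(1/2)) ^ 3 := by
      rw [← Real.exp_nat_mul]; norm_num
    rw [e2]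
    calc (0.22 : ℝ) ≤ 0.606 ^ 3 := by norm_num
      _ ≤ _ := pow_le_pow_left₀ (by norm_num) exp_half 3
  have h2 : (0.22 : ℝ) * ((n - s - 1).choose (k - 1) : ℝ) ≤ ((n - s + 1 - 2 * k).choose (k - 1) : ℝ) :=
    le_trans (mul_le_mul_of_nonneg_right h1 (by positivity)) h
  have h3 : (22 : ℝ) * ((n - s - 1).choose (k - 1) : ℝ) ≤ 100 * ((n - s + 1 - 2 * k).choose (k - 1) : ℝ) := by
    linarith
  exact_mod_cast h3

lemma meet_card (n k : ℕ) (U : Finset ℕ) (hU : U ⊆ Finset.range n) :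
    (((Finset.range n).powersetCard k).filter (fun A => ¬ Disjoint A U)).card +
      (n - U.card).choose k = n.choose k := by
  have h := Finset.card_filter_add_card_filter_not (s := (Finset.range n).powersetCard k)
    (fun A => Disjoint A U)
  have h2 : ((Finset.range n).powersetCard k).filter (fun A => Disjoint A U) =
      (Finset.range n \ U).powersetCard k := by
    ext A
    simp only [Finset.mem_filter, Finset.mem_powersetCard, Finset.subset_sdiff]
    tauto
  rw [h2, Finset.card_powersetCard, Finset.card_powersetCard, Finset.card_sdiff_of_subset hU,
    Finset.card_range] at h
  omega

lemma split_card {F : Finset (Finset ℕ)} {n k : ℕ} (U : Finset ℕ)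
    (hF : F ⊆ (Finset.range n).powersetCard k) :
    F.card + (((Finset.range n).powersetCard k).filter (fun A => ¬ Disjoint A U ∧ A ∉ F)).card =
    (((Finset.range n).powersetCard k).filter (fun A => ¬ Disjoint A U)).card +
      (F.filter (fun A => Disjoint A U)).card := by
  have h1 := Finset.card_filter_add_card_filter_not (s := F) (fun A => Disjoint A U)
  have h2 := Finset.card_filter_add_card_filter_not
    (s := ((Finset.range n).powersetCard k).filter (fun A => ¬ Disjoint A U)) (fun A => A ∈ F)
  rw [Finset.filter_filter, Finset.filter_filter] at h2
  have h3 : ((Finset.range n).powersetCard k).filter (fun A => ¬ Disjoint A U ∧ A ∈ F) =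
      F.filter (fun A => ¬ Disjoint A U) := by
    ext A
    rw [Finset.mem_filter, Finset.mem_filter]
    constructor
    · rintro ⟨_, h, h'⟩; exact ⟨h', h⟩
    · rintro ⟨h', h⟩; exact ⟨hF h', h, h'⟩
  rw [h3] at h2
  omega

lemma link_card {F : Finset (Finset ℕ)} {n m : ℕ} (W : Finset ℕ) (i : ℕ) (P : Finset ℕ → Prop)
    [DecidablePred P] (hF : F ⊆ (Finset.range n).powersetCard (m + 1))
    (hP : ∀ A ∈ F, P A → i ∈ A ∧ A.erase i ⊆ W) :
    (F.filter P).card ≤ ((W.powersetCard m).filter (fun D => insert i D ∈ F)).card := by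
  apply Finset.card_le_card_of_injOn (fun A => A.erase i)
  · intro A hA
    have hA' := Finset.mem_filter.1 hA
    obtain ⟨h1, h2⟩ := hP A hA'.1 hA'.2
    have hc := (Finset.mem_powersetCard.1 (hF hA'.1)).2
    refine Finset.mem_filter.2 ⟨Finset.mem_powersetCard.2 ⟨h2, ?_⟩, ?_⟩
    · rw [Finset.card_erase_of_mem h1, hc]; rfl
    · rw [Finset.insert_erase h1]; exact hA'.1
  · intro A hA B hB h
    have hA' := Finset.mem_filter.1 hA
    have hB' := Finset.mem_filter.1 hB
    have h1 := (hP A hA'.1 hA'.2).1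
    have h2 := (hP B hB'.1 hB'.2).1
    simp only at h
    rw [← Finset.insert_erase h1, ← Finset.insert_erase h2, h]

lemma shifted_case {n k s : ℕ} (hs : 1 ≤ s) (hk : 5 * s ≤ k) (hn : 2 * k ^ 2 ≤ n)
    {F : Finset (Finset ℕ)} (hF : F ⊆ (Finset.range n).powersetCard k) (hno : NoM F s)
    (hsh : ∀ A ∈ F, ∀ i j, i < j → j ∈ A → i ∉ A → insert i (A.erase j) ∈ F)
    {A : Finset ℕ} (hA : A ∈ F) (hAd : Disjoint A (Finset.range s)) :
    100 * F.card + 100 * (n - s).choose k + 21 * (n - s - 1).choose (k - 1) ≤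
      100 * n.choose k := by
  classical
  have hk5 : 5 ≤ k := by omega
  have hnk : 10 * k ≤ n := by nlinarith
  obtain ⟨m, rfl⟩ : ∃ m, k = m + 1 := ⟨k - 1, by omega⟩
  -- a set containing `s`
  obtain ⟨B, hB, hBd, hsB⟩ : ∃ B ∈ F, Disjoint B (Finset.range s) ∧ s ∈ B := by
    by_cases hsA : s ∈ A
    · exact ⟨A, hA, hAd, hsA⟩
    · have hAc := (Finset.mem_powersetCard.1 (hF hA)).2
      obtain ⟨j, hj⟩ : A.Nonempty := by rw [← Finset.card_pos]; omega
      have hjs : s < j := by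
        have h1 : j ∉ Finset.range s := Finset.disjoint_left.1 hAd hj
        have h2 : j ≠ s := fun h => hsA (h ▸ hj)
        simp at h1; omega
      refine ⟨_, hsh A hA s j hjs hj hsA, ?_, by simp⟩
      rw [Finset.disjoint_insert_left]
      exact ⟨by simp, hAd.mono_left (Finset.erase_subset _ _)⟩
  have hB' := Finset.mem_powersetCard.1 (hF hB)
  set W := Finset.Ico (s + 1) n with hW
  have hWc : W.card = n - s - 1 := by rw [hW, Nat.card_Ico]; omega
  have hrW : Disjoint (Finset.range (s + 1)) W := by
    rw [Finset.disjoint_left]; intro x hx; simp at hx; simp [hW]; omega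
  have hrW' : Disjoint (Finset.range s) W := hrW.mono_left (by
    intro x hx; simp at hx ⊢; omega)
  have hWn : W ⊆ Finset.range n := by intro x hx; simp [hW] at hx ⊢; omega
  have hsn : Finset.range s ⊆ Finset.range n := by intro x hx; simp at hx ⊢; omega
  set M := ∑ u ∈ Finset.range s,
    ((W.powersetCard m).filter (fun D => insert u D ∉ F)).card with hM
  set fs := ((W.powersetCard m).filter (fun D => insert s D ∈ F)).card with hfs
  -- lower bound on M
  have hM1 : (n - s - (m + 1)).choose m ≤ M := by
    set W' := W \ B with hW'
    have hW'c : W'.card = n - s - (m + 1) := by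
      have : W' = W \ (B.erase s) := by
        ext x
        simp only [hW', Finset.mem_sdiff, Finset.mem_erase, hW, Finset.mem_Ico]
        constructor
        · rintro ⟨h1, h2⟩; exact ⟨h1, fun h => h2 h.2⟩
        · rintro ⟨h1, h2⟩; exact ⟨h1, fun h => h2 ⟨by omega, h⟩⟩
      rw [this, Finset.card_sdiff_of_subset, hWc, Finset.card_erase_of_mem hsB, hB'.2]
      · omega
      · intro x hx
        rw [Finset.mem_erase] at hx
        have h1 := Finset.disjoint_left.1 hBd hx.2
        have h2 := hB'.1 hx.2
        simp [hW] at h1 h2 ⊢; omega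
    have h := ext_lemma (m := m) hno W' (Finset.range s) {s} (fun _ => B) (by simpa using hB) (by simp)
      (by intro _ _; exact Finset.disjoint_sdiff) (by intro _ _; exact hBd) (by simp)
      (hrW'.mono_right Finset.sdiff_subset) (by simp) (by
        rw [hW'c, Finset.card_range]
        have : 5 * (s * m) ≤ m * m + m := by nlinarith
        have : 2 * (m * m + 2 * m + 1) ≤ n := by nlinarith
        omega)
    rw [hW'c] at h
    refine h.trans (Finset.sum_le_sum ?_)
    intro u _
    apply Finset.card_le_card
    apply Finset.filter_subset_filter
    exact Finset.powersetCard_mono Finset.sdiff_subset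
  -- cross-dependence
  have hM2 := cross_lemma (m := m) (x := 2 * (m + 1)) hno W hrW (by
    intro D hD h j hj
    have hsD : s ∉ D := fun h' => by
      have := (Finset.mem_powersetCard.1 hD).1 h'
      simp [hW] at this
    have hjD : j ∉ D := fun h' => by
      have := (Finset.mem_powersetCard.1 hD).1 h'
      simp [hW] at this; omega
    have := hsh _ h j s hj (by simp) (by simp [hjD]; omega)
    rwa [Finset.erase_insert hsD] at this) (by
      rw [hWc]
      have : 2 * (m * m + 2 * m + 1) ≤ n := by nlinarith
      have : 2 * (m + 1) * m = 2 * (m * m) + 2 * m := by ring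
      omega) (by omega)
  have hM2' : ((2 * (m + 1) : ℤ) - s) * fs ≤ M := by
    rw [hM, hfs]; push_cast; push_cast at hM2; exact hM2
  -- sets avoiding [s]
  have hav : (F.filter (fun A => Disjoint A (Finset.range s))).card ≤ (s + 1) * fs := by
    have h1 := Finset.card_filter_add_card_filter_not
      (s := F.filter (fun A => Disjoint A (Finset.range s))) (fun A => s ∈ A)
    rw [Finset.filter_filter, Finset.filter_filter] at h1
    have h2 : (F.filter (fun A => Disjoint A (Finset.range s) ∧ s ∈ A)).card ≤ fs := by
      apply link_card W s _ hF
      intro A hA hP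
      refine ⟨hP.2, ?_⟩
      intro x hx
      rw [Finset.mem_erase] at hx
      have h1 := Finset.disjoint_left.1 hP.1 hx.2
      have h2 := (Finset.mem_powersetCard.1 (hF hA)).1 hx.2
      simp [hW] at h1 h2 ⊢; omega
    set G := F.filter (fun A => Disjoint A (Finset.range s) ∧ ¬ s ∈ A) with hG
    have hGW : ∀ A ∈ G, A ⊆ W ∧ A.card = m + 1 := by
      intro A hA
      rw [Finset.mem_filter] at hA
      have h0 := Finset.mem_powersetCard.1 (hF hA.1)
      refine ⟨?_, h0.2⟩
      intro x hx
      have h1 := Finset.disjoint_left.1 hA.2.1 hx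
      have h2 := h0.1 hx
      have h3 : x ≠ s := fun h => hA.2.2 (h ▸ hx)
      simp [hW] at h1 h2 ⊢; omega
    have h3 : G.card ≤ s * G.shadow.card := by
      apply shadow_bound s (s + 1) n (m + 1) G hGW
      · intro A hA i j hi hij hj hiA
        have hA' := Finset.mem_filter.1 hA
        refine Finset.mem_filter.2 ⟨hsh A hA'.1 i j hij hj hiA, ?_, ?_⟩
        · rw [Finset.disjoint_insert_left]
          exact ⟨by simp; omega, hA'.2.1.mono_left (Finset.erase_subset _ _)⟩
        · intro h
          rcases Finset.mem_insert.1 h with h | h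
          · omega
          · exact hA'.2.2 (Finset.mem_of_mem_erase h)
      · intro I f hf
        exact hno I f (fun i hi => (Finset.mem_filter.1 (hf i hi)).1)
    have h4 : G.shadow.card ≤ fs := by
      apply Finset.card_le_card
      intro D hD
      obtain ⟨A, hA, x, hx, rfl⟩ := Finset.mem_shadow_iff.1 hD
      have hA' := Finset.mem_filter.1 hA
      have hxW := (hGW A hA).1 hx
      refine Finset.mem_filter.2 ⟨Finset.mem_powersetCard.2
        ⟨(Finset.erase_subset _ _).trans (hGW A hA).1, ?_⟩, ?_⟩
      · rw [Finset.card_erase_of_mem hx, (hGW A hA).2]; rfl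
      · exact hsh A hA'.1 s x (by simp [hW] at hxW; omega) hx hA'.2.2
    have h5 : s * G.shadow.card ≤ s * fs := Nat.mul_le_mul_left _ h4
    have h6 : (s + 1) * fs = s * fs + fs := by ring
    omega
  have hmiss := miss_lemma (F := F) (n := n) (m := m) W (Finset.range s) hWn hsn hrW'
  have hsplit := split_card (Finset.range s) hF
  have hmeet := meet_card n (m + 1) (Finset.range s) hsn
  rw [Finset.card_range] at hmeet
  have hnum := num_P1 hs hk hn
  simp only [Nat.add_sub_cancel] at hnum ⊢
  rw [← hM] at hmiss
  -- final arithmetic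
  have hfin : 9 * ((s + 1) * fs) ≤ 2 * M := by
    have h1 : (9 : ℤ) * ((s + 1) * fs) ≤ 2 * M := by
      have h2 : (9 * (s + 1) : ℤ) ≤ 2 * (2 * (m + 1) - s) := by
        have : (5 * s : ℤ) ≤ m + 1 := by exact_mod_cast hk
        have : (1 : ℤ) ≤ s := by exact_mod_cast hs
        linarith
      have h3 := mul_le_mul_of_nonneg_right h2 (show (0 : ℤ) ≤ fs by positivity)
      linarith
    exact_mod_cast h1
  omega

set_option maxHeartbeats 4000000 in
lemma trans_case {n k s : ℕ} (hs : 1 ≤ s) (hk : 5 * s ≤ k) (hn : 2 * k ^ 2 ≤ n)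
    {F : Finset (Finset ℕ)} (hF : F ⊆ (Finset.range n).powersetCard k) (hno : NoM F s)
    {U' : Finset ℕ} {i j : ℕ} (hU' : U' ⊆ Finset.range n) (hU'c : U'.card = s - 1)
    (hi : i < n) (hj : j < n) (hiU : i ∉ U') (hjU : j ∉ U') (hij : i ≠ j)
    (h1 : ∀ A ∈ F, Disjoint A U' → i ∈ A ∨ j ∈ A)
    (h2 : ∀ D : Finset ℕ, Disjoint D U' → i ∉ D → j ∉ D → insert i D ∈ F → insert j D ∉ F)
    {A1 A2 : Finset ℕ} (hA1 : A1 ∈ F) (hA1d : Disjoint A1 U') (hjA1 : j ∈ A1) (hiA1 : i ∉ A1)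
    (hA2 : A2 ∈ F) (hA2d : Disjoint A2 U') (hiA2 : i ∈ A2) (hjA2 : j ∉ A2) :
    100 * F.card + 100 * (n - s).choose k + 21 * (n - s - 1).choose (k - 1) ≤
      100 * n.choose k := by
  classical
  have hk5 : 5 ≤ k := by omega
  have hnk : 10 * k ≤ n := by nlinarith
  obtain ⟨m, rfl⟩ : ∃ m, k = m + 2 := ⟨k - 2, by omega⟩
  set W := Finset.range n \ (insert i (insert j U')) with hW
  have hWmem : ∀ x, x ∈ W ↔ x < n ∧ x ≠ i ∧ x ≠ j ∧ x ∉ U' := by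
    intro x; simp [hW]
  have hWn : W ⊆ Finset.range n := Finset.sdiff_subset
  have hWc : W.card = n - s - 1 := by
    rw [hW, Finset.card_sdiff_of_subset, Finset.card_insert_of_notMem (by simp [hij, hiU]),
      Finset.card_insert_of_notMem hjU, hU'c, Finset.card_range]
    · omega
    · intro x hx
      simp only [Finset.mem_insert] at hx
      rcases hx with rfl | rfl | hx
      · simpa using hi
      · simpa using hj
      · exact hU' hx
  have hUW : Disjoint U' W := by
    rw [Finset.disjoint_left]; intro x hx hx'
    exact ((hWmem x).1 hx').2.2.2 hx
  set Gi := (W.powersetCard (m + 1)).filter (fun D => insert i D ∈ F) with hGi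
  set Gj := (W.powersetCard (m + 1)).filter (fun D => insert j D ∈ F) with hGj
  have hDW : ∀ D ∈ W.powersetCard (m + 1), Disjoint D U' ∧ i ∉ D ∧ j ∉ D := by
    intro D hD
    have hD' := (Finset.mem_powersetCard.1 hD).1
    exact ⟨hUW.symm.mono_left hD', fun h => ((hWmem i).1 (hD' h)).2.1 rfl,
      fun h => ((hWmem j).1 (hD' h)).2.2.1 rfl⟩
  have hGij : Disjoint Gi Gj := by
    rw [Finset.disjoint_left]
    intro D hD hD'
    rw [Finset.mem_filter] at hD hD'
    obtain ⟨a, b, c⟩ := hDW D hD.1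
    exact h2 D a b c hD.2 hD'.2
  have hGsum : Gi.card + Gj.card ≤ (n - s - 1).choose (m + 1) := by
    rw [← Finset.card_union_of_disjoint hGij, ← hWc, ← Finset.card_powersetCard]
    exact Finset.card_le_card (Finset.union_subset (Finset.filter_subset _ _)
      (Finset.filter_subset _ _))
  -- the sets avoiding U'
  have hav : (F.filter (fun A => Disjoint A U')).card ≤
      Gi.card + Gj.card + (n - s - 1).choose m := by
    have hsub : F.filter (fun A => Disjoint A U') ⊆
        (F.filter (fun A => Disjoint A U' ∧ i ∈ A ∧ j ∉ A) ∪
          F.filter (fun A => Disjoint A U' ∧ j ∈ A ∧ i ∉ A)) ∪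
          F.filter (fun A => Disjoint A U' ∧ i ∈ A ∧ j ∈ A) := by
      intro A hA
      rw [Finset.mem_filter] at hA
      simp only [Finset.mem_union, Finset.mem_filter]
      have := h1 A hA.1 hA.2
      tauto
    have hAW : ∀ A ∈ F, Disjoint A U' → ∀ x ∈ A, x ≠ i → x ≠ j → x ∈ W := by
      intro A hA hd x hx hxi hxj
      refine (hWmem x).2 ⟨?_, hxi, hxj, Finset.disjoint_left.1 hd hx⟩
      simpa using (Finset.mem_powersetCard.1 (hF hA)).1 hx
    have e1 : (F.filter (fun A => Disjoint A U' ∧ i ∈ A ∧ j ∉ A)).card ≤ Gi.card := by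
      apply link_card W i _ hF
      rintro A hA ⟨hd, h3, h4⟩
      refine ⟨h3, ?_⟩
      intro x hx
      rw [Finset.mem_erase] at hx
      exact hAW A hA hd x hx.2 hx.1 (fun h => h4 (h ▸ hx.2))
    have e2 : (F.filter (fun A => Disjoint A U' ∧ j ∈ A ∧ i ∉ A)).card ≤ Gj.card := by
      apply link_card W j _ hF
      rintro A hA ⟨hd, h3, h4⟩
      refine ⟨h3, ?_⟩
      intro x hx
      rw [Finset.mem_erase] at hx
      exact hAW A hA hd x hx.2 (fun h => h4 (h ▸ hx.2)) hx.1
    have e3 : (F.filter (fun A => Disjoint A U' ∧ i ∈ A ∧ j ∈ A)).card ≤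
        (n - s - 1).choose m := by
      rw [← hWc, ← Finset.card_powersetCard]
      apply Finset.card_le_card_of_injOn (fun A => (A.erase i).erase j)
      · intro A hA
        obtain ⟨hA, hd, h3, h4⟩ := Finset.mem_filter.1 hA
        have hji : j ∈ A.erase i := Finset.mem_erase.2 ⟨hij.symm, h4⟩
        refine Finset.mem_powersetCard.2 ⟨?_, ?_⟩
        · intro x hx
          simp only [Finset.mem_erase] at hx
          exact hAW A hA hd x hx.2.2 hx.2.1 hx.1
        · rw [Finset.card_erase_of_mem hji, Finset.card_erase_of_mem h3,
            (Finset.mem_powersetCard.1 (hF hA)).2]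
          rfl
      · intro A hA B hB h
        obtain ⟨hA, hd, h3, h4⟩ := Finset.mem_filter.1 hA
        obtain ⟨hB, hd', h3', h4'⟩ := Finset.mem_filter.1 hB
        have hji : j ∈ A.erase i := Finset.mem_erase.2 ⟨hij.symm, h4⟩
        have hji' : j ∈ B.erase i := Finset.mem_erase.2 ⟨hij.symm, h4'⟩
        simp only at h
        rw [← Finset.insert_erase h3, ← Finset.insert_erase h3', ← Finset.insert_erase hji,
          ← Finset.insert_erase hji', h]
    have := (Finset.card_le_card hsub).trans ((Finset.card_union_le _ _).trans
      (Nat.add_le_add_right (Finset.card_union_le _ _) _))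
    omega
  have hsplit := split_card U' hF
  have hmeet := meet_card n (m + 2) U' hU'
  rw [hU'c] at hmeet
  have hp1 : (n - (s - 1)).choose (m + 2) = (n - s).choose (m + 1) + (n - s).choose (m + 2) := by
    have : n - (s - 1) = (n - s) + 1 := by omega
    rw [this, Nat.choose_succ_succ]
  have hp2 : (n - s).choose (m + 1) = (n - s - 1).choose m + (n - s - 1).choose (m + 1) := by
    have : n - s = (n - s - 1) + 1 := by omega
    rw [this, Nat.choose_succ_succ]; simp
  have hnum1 := num_P1 hs hk hn
  have hnum2 := num_P2 hs hk hn
  have em : m + 2 - 1 = m + 1 := by omega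
  rw [em] at hnum1 hnum2 ⊢
  by_cases hcross : ∃ C ∈ Gi, ∃ D ∈ Gj, Disjoint C D
  · obtain ⟨C, hC, D, hD, hCD⟩ := hcross
    obtain ⟨hC, hCF⟩ := Finset.mem_filter.1 hC
    obtain ⟨hD, hDF⟩ := Finset.mem_filter.1 hD
    obtain ⟨c1, c2, c3⟩ := hDW C hC
    obtain ⟨d1, d2, d3⟩ := hDW D hD
    set W' := W \ (C ∪ D) with hW'
    have hW'c : W'.card = n - s + 1 - 2 * (m + 2) := by
      rw [hW', Finset.card_sdiff_of_subset (Finset.union_subset (Finset.mem_powersetCard.1 hC).1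
        (Finset.mem_powersetCard.1 hD).1), Finset.card_union_of_disjoint hCD,
        (Finset.mem_powersetCard.1 hC).2, (Finset.mem_powersetCard.1 hD).2, hWc]
      omega
    have hiW : i ∉ W' := fun h => ((hWmem i).1 (Finset.sdiff_subset h)).2.1 rfl
    have hjW : j ∉ W' := fun h => ((hWmem j).1 (Finset.sdiff_subset h)).2.2.1 rfl
    have hCW : Disjoint C W' := by
      rw [Finset.disjoint_left]; intro x hx hx'
      exact (Finset.mem_sdiff.1 hx').2 (Finset.mem_union_left _ hx)
    have hDW' : Disjoint D W' := by
      rw [Finset.disjoint_left]; intro x hx hx'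
      exact (Finset.mem_sdiff.1 hx').2 (Finset.mem_union_right _ hx)
    have hdd : Disjoint (insert i C) (insert j D) := by
      rw [Finset.disjoint_insert_left, Finset.disjoint_insert_right]
      exact ⟨by simp [hij, d2], c3, hCD⟩
    have h := ext_lemma (m := m + 1) hno W' U' {i, j}
      (fun p => if p = i then insert i C else insert j D)
      (by
        intro p hp
        by_cases hpi : p = i
        · simpa only [hpi, if_true] using hCF
        · simpa only [hpi, if_false] using hDF)
      (by
        intro p hp q hq hpq
        simp only [Finset.mem_insert, Finset.mem_singleton] at hp hq
        rcases hp with rfl | rfl <;> rcases hq with rfl | rfl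
        · exact absurd rfl hpq
        · simpa only [if_true, hpq.symm, if_false] using hdd
        · simpa only [if_true, hpq, if_false] using hdd.symm
        · exact absurd rfl hpq)
      (by
        intro p hp
        by_cases hpi : p = i
        · simp only [hpi, if_true]
          rw [Finset.disjoint_insert_left]; exact ⟨hiW, hCW⟩
        · simp only [hpi, if_false]
          rw [Finset.disjoint_insert_left]; exact ⟨hjW, hDW'⟩)
      (by
        intro p hp
        by_cases hpi : p = i
        · simp only [hpi, if_true]
          rw [Finset.disjoint_insert_left]; exact ⟨hiU, c1⟩
        · simp only [hpi, if_false]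
          rw [Finset.disjoint_insert_left]; exact ⟨hjU, d1⟩)
      (by
        rw [Finset.disjoint_insert_left, Finset.disjoint_singleton_left]; exact ⟨hiU, hjU⟩)
      (hUW.mono_right Finset.sdiff_subset)
      (by rw [Finset.card_pair hij, hU'c]; omega)
      (by
        rw [hW'c, hU'c]
        have a1 : (s - 1) * (m + 1) ≤ s * (m + 1) := Nat.mul_le_mul_right _ (by omega)
        have a2 : 5 * (s * (m + 1)) ≤ (m + 2) * (m + 1) := by nlinarith
        have a3 : (m + 2) * (m + 1) = m * m + 3 * m + 2 := by ring
        have a4 : 2 * (m * m + 4 * m + 4) ≤ n := by nlinarith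
        have a5 : 3 * m ≤ m * m := Nat.mul_le_mul_right _ (by omega)
        omega)
    have hmiss := miss_lemma (F := F) (n := n) (m := m + 1) W' U' (Finset.sdiff_subset.trans hWn)
      hU' (hUW.mono_right Finset.sdiff_subset)
    rw [hW'c] at h
    have e : m + 1 + 1 = m + 2 := rfl
    rw [e] at hmiss
    omega
  · push Not at hcross
    -- both links are small
    have hsmall : ∀ D0 ∈ W.powersetCard (m + 1), ∀ G ⊆ W.powersetCard (m + 1),
        (∀ D ∈ G, ¬ Disjoint D D0) →
        G.card + (n - s - (m + 2)).choose (m + 1) ≤ (n - s - 1).choose (m + 1) := by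
      intro D0 hD0 G hG hd
      have hD0' := Finset.mem_powersetCard.1 hD0
      have hdis : Disjoint G ((W \ D0).powersetCard (m + 1)) := by
        rw [Finset.disjoint_left]
        intro D hD hD'
        apply hd D hD
        exact Finset.disjoint_sdiff.symm.mono_left (Finset.mem_powersetCard.1 hD').1
      have hc : ((W \ D0).powersetCard (m + 1)).card = (n - s - (m + 2)).choose (m + 1) := by
        rw [Finset.card_powersetCard, Finset.card_sdiff_of_subset hD0'.1, hD0'.2, hWc]
        congr 1; omega
      rw [← hc, ← Finset.card_union_of_disjoint hdis, ← hWc, ← Finset.card_powersetCard]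
      exact Finset.card_le_card (Finset.union_subset hG
        (Finset.powersetCard_mono Finset.sdiff_subset))
    have hmemE : ∀ A ∈ F, Disjoint A U' → ∀ a b, a ∈ A → b ∉ A → (a = i ∧ b = j ∨ a = j ∧ b = i) →
        A.erase a ∈ W.powersetCard (m + 1) := by
      intro A hA hd a b ha hb hab
      have hA' := Finset.mem_powersetCard.1 (hF hA)
      refine Finset.mem_powersetCard.2 ⟨?_, by rw [Finset.card_erase_of_mem ha, hA'.2]; rfl⟩
      intro x hx
      rw [Finset.mem_erase] at hx
      have hxb : x ≠ b := fun h => hb (h ▸ hx.2)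
      refine (hWmem x).2 ⟨by simpa using hA'.1 hx.2, ?_, ?_, Finset.disjoint_left.1 hd hx.2⟩
      · rcases hab with ⟨rfl, rfl⟩ | ⟨rfl, rfl⟩
        · exact hx.1
        · exact hxb
      · rcases hab with ⟨rfl, rfl⟩ | ⟨rfl, rfl⟩
        · exact hxb
        · exact hx.1
    have hE1 := hmemE A1 hA1 hA1d j i hjA1 hiA1 (Or.inr ⟨rfl, rfl⟩)
    have hE2 := hmemE A2 hA2 hA2d i j hiA2 hjA2 (Or.inl ⟨rfl, rfl⟩)
    have hE1j : A1.erase j ∈ Gj := Finset.mem_filter.2 ⟨hE1, by rwa [Finset.insert_erase hjA1]⟩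
    have hE2i : A2.erase i ∈ Gi := Finset.mem_filter.2 ⟨hE2, by rwa [Finset.insert_erase hiA2]⟩
    have b1 := hsmall _ hE1 Gi (Finset.filter_subset _ _) (fun D hD => hcross D hD _ hE1j)
    have b2 := hsmall _ hE2 Gj (Finset.filter_subset _ _)
      (fun D hD h => hcross _ hE2i D hD h.symm)
    omega

/-- Stability: a large family with matching number at most `s` has a cover of size `s`. -/
lemma stability {n k s : ℕ} (hs : 1 ≤ s) (hk : 5 * s ≤ k) (hn : 2 * k ^ 2 ≤ n) :
    ∀ (p : ℕ) (F : Finset (Finset ℕ)), ∑ B ∈ F, ∑ x ∈ B, x ≤ p →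
    F ⊆ (Finset.range n).powersetCard k → NoM F s →
    100 * n.choose k < 100 * F.card + 100 * (n - s).choose k +
      21 * (n - s - 1).choose (k - 1) →
    ∃ U ⊆ Finset.range n, U.card = s ∧ ∀ A ∈ F, ¬ Disjoint A U := by
  classical
  intro p
  induction p using Nat.strong_induction_on with
  | _ p ih =>
  intro F hp hF hno hbig
  have hnk : s ≤ n := by nlinarith
  by_cases hsh : ∀ i j, i < j → ∀ A ∈ F, sh i j A ∈ F
  · refine ⟨Finset.range s, by intro x hx; simp at hx ⊢; omega, by simp, ?_⟩
    intro A hA hd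
    have := shifted_case hs hk hn hF hno (by
      intro A hA i j hij hj hi
      have := hsh i j hij A hA
      rwa [sh, if_pos ⟨hj, hi⟩] at this) hA hd
    omega
  push Not at hsh
  obtain ⟨i, j, hij, A, hA, hAs⟩ := hsh
  have hjA := sh_notMem hA hAs
  have hjn : j < n := by simpa using (Finset.mem_powersetCard.1 (hF hA)).1 hjA.1
  have hin : i < n := by omega
  have hpot := shF_potential hij hA hAs
  obtain ⟨U, hU, hUc, hcov⟩ := ih (∑ B ∈ shF i j F, ∑ x ∈ B, x) (by omega) (shF i j F) le_rfl
    (shF_subset hin hF) (NoM_shF hno) (by rw [card_shF]; exact hbig)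
  -- elements of F that are not in the shifted family
  have hnot : ∀ B ∈ F, B ∉ shF i j F → j ∈ B ∧ i ∉ B ∧ insert i (B.erase j) ∈ shF i j F := by
    intro B hB hBn
    have hBs : sh i j B ∉ F := fun h => hBn (mem_shF.2 (Or.inl ⟨hB, h⟩))
    obtain ⟨a, b⟩ := sh_notMem hB hBs
    refine ⟨a, b, mem_shF.2 (Or.inr ⟨?_, B, hB, a, b, rfl⟩)⟩
    rwa [sh, if_pos ⟨a, b⟩] at hBs
  by_cases hjU : j ∈ U
  · refine ⟨U, hU, hUc, ?_⟩
    intro B hB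
    by_cases hBS : B ∈ shF i j F
    · exact hcov B hBS
    · exact Finset.not_disjoint_iff.2 ⟨j, (hnot B hB hBS).1, hjU⟩
  by_cases hiU : i ∈ U
  swap
  · refine ⟨U, hU, hUc, ?_⟩
    intro B hB
    by_cases hBS : B ∈ shF i j F
    · exact hcov B hBS
    · obtain ⟨x, hx, hxU⟩ := Finset.not_disjoint_iff.1 (hcov _ (hnot B hB hBS).2.2)
      rcases Finset.mem_insert.1 hx with rfl | hx
      · exact absurd hxU hiU
      · exact Finset.not_disjoint_iff.2 ⟨x, Finset.mem_of_mem_erase hx, hxU⟩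
  by_cases hc1 : ∀ B ∈ F, ¬ Disjoint B U
  · exact ⟨U, hU, hUc, hc1⟩
  by_cases hc2 : ∀ B ∈ F, ¬ Disjoint B (insert j (U.erase i))
  · refine ⟨insert j (U.erase i), ?_, ?_, hc2⟩
    · apply Finset.insert_subset (by simpa using hjn) ((Finset.erase_subset _ _).trans hU)
    · rw [Finset.card_insert_of_notMem (by simp [hjU]), Finset.card_erase_of_mem hiU, hUc]
      omega
  exfalso
  push Not at hc1 hc2
  obtain ⟨A1, hA1, hA1d⟩ := hc1
  obtain ⟨A2, hA2, hA2d⟩ := hc2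
  have hUe : U = insert i (U.erase i) := (Finset.insert_erase hiU).symm
  have hA1n : A1 ∉ shF i j F := fun h => hcov A1 h hA1d
  obtain ⟨hj1, hi1, _⟩ := hnot A1 hA1 hA1n
  rw [Finset.disjoint_insert_right] at hA2d
  -- every set of F avoiding U' contains i or j
  have hor : ∀ B ∈ F, Disjoint B (U.erase i) → i ∈ B ∨ j ∈ B := by
    intro B hB hd
    by_cases hBS : B ∈ shF i j F
    · have := hcov B hBS
      rw [hUe, Finset.disjoint_insert_right] at this
      left
      by_contra h
      exact this ⟨h, hd⟩
    · exact Or.inr (hnot B hB hBS).1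
  have := trans_case hs hk hn hF hno (U' := U.erase i) (i := i) (j := j)
    ((Finset.erase_subset _ _).trans hU) (by rw [Finset.card_erase_of_mem hiU, hUc]) hin hjn
    (by simp) (by simp [hjU]) hij.ne hor (by
      intro D hd hiD hjD hins hins'
      have hmem : insert j D ∈ shF i j F := by
        apply mem_shF.2 (Or.inl ⟨hins', ?_⟩)
        rw [sh, if_pos ⟨by simp, by simp [hiD, hij.ne]⟩, Finset.erase_insert hjD]
        exact hins
      apply hcov _ hmem
      rw [hUe, Finset.disjoint_insert_right, Finset.disjoint_insert_left]
      exact ⟨by simp [hiD, hij.ne], by simp [hjU], hd⟩)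
    hA1 (hA1d.mono_right (Finset.erase_subset _ _)) hj1 hi1
    hA2 hA2d.2 ((hor A2 hA2 hA2d.2).resolve_right hA2d.1) hA2d.1
  omega

lemma choose_sub_bound (n t : ℕ) : ∀ s, s ≤ n →
    n.choose (t + 1) ≤ (n - s).choose (t + 1) + s * (n - 1).choose t := by
  intro s
  induction s with
  | zero => intro _; simp
  | succ s ih =>
    intro h
    have h1 := ih (by omega)
    obtain ⟨m, hm⟩ : ∃ m, n - s = m + 1 := ⟨n - s - 1, by omega⟩
    rw [hm, Nat.choose_succ_succ] at h1
    have h2 : n - (s + 1) = m := by omega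
    rw [h2]
    have h3 : m.choose t ≤ (n - 1).choose t := Nat.choose_le_choose t (by omega)
    have h4 : (s + 1) * (n - 1).choose t = s * (n - 1).choose t + (n - 1).choose t := by ring
    simp only [Nat.succ_eq_add_one] at h1
    omega

lemma num_final {n k s t c : ℕ} (hs : 0 < s) (ht : 1 ≤ t)
    (hn : 2 * k ^ 2 ≤ n) (hk : 5 * s * t ≤ k)
    (h : n.choose t * ((n - t).choose (k - t) + 1) ≤
      k.choose t * c + n.choose t * (n - s - t).choose (k - t)) :
    100 * n.choose k < 100 * c + 100 * (n - s).choose k + 21 * (n - s - 1).choose (k - 1) := by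
  have hst : s ≤ s * t := Nat.le_mul_of_pos_right _ ht
  have hts : t ≤ s * t := Nat.le_mul_of_pos_left _ hs
  have hk' : 5 * (s * t) ≤ k := by rw [← mul_assoc]; exact hk
  have hk5 : 5 ≤ k := by omega
  have hnk : 10 * k ≤ n := by nlinarith
  have e1 : n.choose k * k.choose t = n.choose t * (n - t).choose (k - t) :=
    Nat.choose_mul (by omega)
  have e2 : (n - s).choose k * k.choose t = (n - s).choose t * (n - s - t).choose (k - t) :=
    Nat.choose_mul (by omega)
  have e3 : (n - s) * (n - s - 1).choose (k - 1) = (n - s).choose k * k := by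
    obtain ⟨a, ha⟩ : ∃ a, n - s = a + 1 := ⟨n - s - 1, by omega⟩
    obtain ⟨b, rfl⟩ : ∃ b, k = b + 1 := ⟨k - 1, by omega⟩
    rw [ha]
    simpa using Nat.add_one_mul_choose_eq a b
  have e4 : n * (n - 1).choose (t - 1) = n.choose t * t := by
    obtain ⟨a, ha⟩ : ∃ a, n = a + 1 := ⟨n - 1, by omega⟩
    obtain ⟨b, rfl⟩ : ∃ b, t = b + 1 := ⟨t - 1, by omega⟩
    rw [ha]
    simpa using Nat.add_one_mul_choose_eq a b
  have e5 : n.choose t ≤ (n - s).choose t + s * (n - 1).choose (t - 1) := by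
    obtain ⟨b, rfl⟩ : ∃ b, t = b + 1 := ⟨t - 1, by omega⟩
    exact choose_sub_bound n b s (by omega)
  have p1 : 0 < k.choose t := Nat.choose_pos (by omega)
  have p2 : 0 < n.choose t := Nat.choose_pos (by omega)
  obtain ⟨d, hd⟩ : ∃ d, n = s + d := ⟨n - s, by omega⟩
  have hnd : n - s = d := by omega
  obtain ⟨w, hw⟩ : ∃ w, n = s * t + w := ⟨n - s * t, by omega⟩
  have hwk : 21 * (s * t) ≤ w := by omega
  rw [hnd] at h e2 e3 e5 ⊢
  generalize n.choose t = N at *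
  generalize d.choose t = M at *
  generalize k.choose t = a at *
  generalize (n - t).choose (k - t) = X at *
  generalize (d - t).choose (k - t) = Y at *
  generalize n.choose k = P at *
  generalize d.choose k = Q at *
  generalize (d - 1).choose (k - 1) = R at *
  generalize (n - 1).choose (t - 1) = Z at *
  generalize hq : s * t = q at *
  have d0 : 0 < d := by omega
  have w0 : 0 < w := by omega
  -- w * N ≤ n * M
  have f1 : w * N ≤ n * M := by
    have : n * N ≤ n * M + q * N := by
      calc n * N ≤ n * (M + s * Z) := Nat.mul_le_mul_left _ e5
        _ = n * M + s * (n * Z) := by ring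
        _ = n * M + q * N := by rw [e4, ← hq]; ring
    have h2 : n * N = q * N + w * N := by rw [hw]; ring
    omega
  have f2 : 100 * q * d ≤ 21 * k * w := by
    have g1 : 100 * q * d ≤ 20 * k * n := Nat.mul_le_mul (by omega) (by omega)
    have g2 : 20 * n ≤ 21 * w := by omega
    have g3 : 20 * k * n ≤ 21 * k * w := by
      have := Nat.mul_le_mul_left k g2
      nlinarith
    omega
  -- 100 N d ≤ (100 d + 21 k) M
  have f3 : 100 * N * d ≤ (100 * d + 21 * k) * M := by
    apply Nat.le_of_mul_le_mul_left _ w0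
    calc w * (100 * N * d) = 100 * d * (w * N) := by ring
      _ ≤ 100 * d * (n * M) := Nat.mul_le_mul_left _ f1
      _ = (100 * q * d + 100 * d * w) * M := by rw [hw]; ring
      _ ≤ (21 * k * w + 100 * d * w) * M := Nat.mul_le_mul_right _ (by omega)
      _ = w * ((100 * d + 21 * k) * M) := by ring
  have f4 : 100 * (N * Y) ≤ 100 * (Q * a) + 21 * (R * a) := by
    apply Nat.le_of_mul_le_mul_left _ d0
    calc d * (100 * (N * Y)) = 100 * N * d * Y := by ring
      _ ≤ (100 * d + 21 * k) * M * Y := Nat.mul_le_mul_right _ f3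
      _ = 100 * d * (M * Y) + 21 * k * (M * Y) := by ring
      _ = 100 * d * (Q * a) + 21 * a * (Q * k) := by rw [← e2]; ring
      _ = d * (100 * (Q * a) + 21 * (R * a)) := by rw [← e3]; ring
  apply Nat.lt_of_mul_lt_mul_left (a := a)
  have g : N * (X + 1) = P * a + N := by rw [e1]; ring
  rw [g] at h
  nlinarith

lemma double_count {n k t D : ℕ} (F : Finset (Finset (Fin n)))
    (hcard : ∀ A ∈ F, A.card = k)
    (h : ∀ T : Finset (Fin n), T.card = t → D ≤ (F.filter (fun A => T ⊆ A)).card) :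
    n.choose t * D ≤ k.choose t * F.card := by
  classical
  have h1 := Finset.sum_card_bipartiteAbove_eq_sum_card_bipartiteBelow
    (s := (Finset.univ : Finset (Fin n)).powersetCard t) (t := F) (fun T A => T ⊆ A)
  have h2 : n.choose t * D ≤ ∑ T ∈ (Finset.univ : Finset (Fin n)).powersetCard t,
      (Finset.bipartiteAbove (fun T A => T ⊆ A) F T).card := by
    have := Finset.card_nsmul_le_sum ((Finset.univ : Finset (Fin n)).powersetCard t)
      (fun T => (Finset.bipartiteAbove (fun T A => T ⊆ A) F T).card) D (by
        intro T hT
        exact h T (Finset.mem_powersetCard.1 hT).2)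
    simpa using this
  have h3 : ∑ A ∈ F, (Finset.bipartiteBelow (fun T A => T ⊆ A)
      ((Finset.univ : Finset (Fin n)).powersetCard t) A).card = k.choose t * F.card := by
    rw [Finset.sum_congr rfl (g := fun _ => k.choose t)]
    · simp [mul_comm]
    · intro A hA
      have : Finset.bipartiteBelow (fun T A => T ⊆ A)
          ((Finset.univ : Finset (Fin n)).powersetCard t) A = A.powersetCard t := by
        ext T
        simp [Finset.bipartiteBelow, Finset.mem_powersetCard, and_comm]
      rw [this, Finset.card_powersetCard, hcard A hA]
  omega

lemma cover_deg {n k s t : ℕ} (hst : s + t ≤ n) (F : Finset (Finset (Fin n)))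
    (hcard : ∀ A ∈ F, A.card = k) (U : Finset (Fin n)) (hU : U.card = s)
    (hcov : ∀ A ∈ F, ¬ Disjoint A U) :
    ∃ T : Finset (Fin n), T.card = t ∧
      (F.filter (fun A => T ⊆ A)).card + (n - s - t).choose (k - t) ≤
        (n - t).choose (k - t) := by
  classical
  obtain ⟨T, hTU, hT⟩ := Finset.exists_subset_card_eq (s := Uᶜ) (n := t)
    (by rw [Finset.card_compl, Fintype.card_fin, hU]; omega)
  have hd : Disjoint U T := by
    rw [Finset.disjoint_left]
    intro x hx hxT
    exact (Finset.mem_compl.1 (hTU hxT)) hx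
  refine ⟨T, hT, ?_⟩
  have c1 : (Tᶜ).card = n - t := by rw [Finset.card_compl, Fintype.card_fin, hT]
  have c2 : (Tᶜ \ U).card = n - s - t := by
    rw [Finset.card_sdiff_of_subset, c1, hU]
    · omega
    · intro x hx
      exact Finset.mem_compl.2 (Finset.disjoint_left.1 hd hx)
  rw [← c1, ← c2, ← Finset.card_powersetCard, ← Finset.card_powersetCard]
  have hinj : ((F.filter (fun A => T ⊆ A)).image (fun A => A \ T)).card
      = (F.filter (fun A => T ⊆ A)).card := by
    apply Finset.card_image_of_injOn
    intro A hA B hB hAB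
    have hA' := (Finset.mem_filter.1 (Finset.mem_coe.1 hA)).2
    have hB' := (Finset.mem_filter.1 (Finset.mem_coe.1 hB)).2
    have h1 : A \ T = B \ T := hAB
    rw [← Finset.sdiff_union_of_subset hA', ← Finset.sdiff_union_of_subset hB', h1]
  rw [← hinj, ← Finset.card_union_of_disjoint]
  · apply Finset.card_le_card
    intro B hB
    rw [Finset.mem_union] at hB
    rcases hB with hB | hB
    · obtain ⟨A, hA, rfl⟩ := Finset.mem_image.1 hB
      obtain ⟨hAF, hTA⟩ := Finset.mem_filter.1 hA
      rw [Finset.mem_powersetCard]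
      refine ⟨?_, ?_⟩
      · intro x hx
        exact Finset.mem_compl.2 (Finset.mem_sdiff.1 hx).2
      · rw [Finset.card_sdiff_of_subset hTA, hcard A hAF, hT]
    · exact Finset.powersetCard_mono Finset.sdiff_subset hB
  · rw [Finset.disjoint_left]
    intro B hB hB2
    obtain ⟨A, hA, rfl⟩ := Finset.mem_image.1 hB
    obtain ⟨hAF, hTA⟩ := Finset.mem_filter.1 hA
    apply hcov A hAF
    rw [Finset.disjoint_left]
    intro x hxA hxU
    have hxT : x ∉ T := Finset.disjoint_left.1 hd hxU
    have := (Finset.mem_powersetCard.1 hB2).1 (Finset.mem_sdiff.2 ⟨hxA, hxT⟩)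
    exact (Finset.mem_sdiff.1 this).2 hxU

theorem t_degree_EMC (n k s t : ℕ) (hs : 0 < s) (ht : 1 ≤ t)
    (hn : 2 * k ^ 2 ≤ n) (hk : 5 * s * t ≤ k)
    (F : Finset (Finset (Fin n)))
    (hcard : ∀ A ∈ F, A.card = k)
    (hmatch : ∀ M ⊆ F, (∀ A ∈ M, ∀ B ∈ M, A ≠ B → Disjoint A B) → M.card ≤ s) :
    ∃ T : Finset (Fin n), T.card = t ∧
      ((F.filter (fun A => T ⊆ A)).card : ℤ) ≤
        ((n - t).choose (k - t) : ℤ) - ((n - s - t).choose (k - t) : ℤ) := by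
  classical
  by_contra hcon
  push Not at hcon
  have hst : s ≤ s * t := Nat.le_mul_of_pos_right _ ht
  have hts : t ≤ s * t := Nat.le_mul_of_pos_left _ hs
  have hk' : 5 * (s * t) ≤ k := by rw [← mul_assoc]; exact hk
  have hk5 : 5 ≤ k := by omega
  have hnk : 10 * k ≤ n := by nlinarith
  have hmono : (n - s - t).choose (k - t) ≤ (n - t).choose (k - t) :=
    Nat.choose_le_choose _ (by omega)
  have hdc := double_count (t := t)
    (D := (n - t).choose (k - t) + 1 - (n - s - t).choose (k - t)) F hcard (by
      intro T hT
      have := hcon T hT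
      omega)
  have hbig := num_final (c := F.card) hs ht hn hk (by
    have e : (n - t).choose (k - t) + 1 =
      ((n - t).choose (k - t) + 1 - (n - s - t).choose (k - t)) + (n - s - t).choose (k - t) := by
      omega
    rw [e, mul_add]
    exact Nat.add_le_add_right hdc _)
  set G : Finset (Finset ℕ) := F.image (fun A => A.map Fin.valEmbedding) with hG
  have hGc : G.card = F.card :=
    Finset.card_image_of_injective _ (Finset.map_injective _)
  have hGk : G ⊆ (Finset.range n).powersetCard k := by
    intro B hB
    obtain ⟨A, hA, rfl⟩ := Finset.mem_image.1 hB
    rw [Finset.mem_powersetCard, Finset.card_map]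
    refine ⟨?_, hcard A hA⟩
    intro x hx
    obtain ⟨y, _, rfl⟩ := Finset.mem_map.1 hx
    exact Finset.mem_range.2 y.2
  have hno : NoM G s := by
    intro I f hf hdis
    have hex : ∀ i, ∃ A : Finset (Fin n), i ∈ I → A ∈ F ∧ A.map Fin.valEmbedding = f i := by
      intro i
      by_cases hi : i ∈ I
      · obtain ⟨A, hA, hAf⟩ := Finset.mem_image.1 (hf i hi)
        exact ⟨A, fun _ => ⟨hA, hAf⟩⟩
      · exact ⟨∅, fun h => absurd h hi⟩
    choose g hg using hex
    have hdg : ∀ i ∈ I, ∀ j ∈ I, i ≠ j → Disjoint (g i) (g j) := by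
      intro i hi j hj hij
      have := hdis i hi j hj hij
      rw [← (hg i hi).2, ← (hg j hj).2, Finset.disjoint_map] at this
      exact this
    have hc : (I.image g).card = I.card := by
      apply Finset.card_image_of_injOn
      intro i hi j hj hij
      by_contra hne
      have h1 := hdg i hi j hj hne
      have h2 : g i = g j := hij
      rw [h2, disjoint_self] at h1
      have h3 := hcard _ (hg j hj).1
      rw [h1] at h3
      simp at h3
      omega
    rw [← hc]
    apply hmatch
    · intro A hA
      obtain ⟨i, hi, rfl⟩ := Finset.mem_image.1 hA
      exact (hg i hi).1
    · intro A hA B hB hAB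
      obtain ⟨i, hi, rfl⟩ := Finset.mem_image.1 hA
      obtain ⟨j, hj, rfl⟩ := Finset.mem_image.1 hB
      exact hdg i hi j hj (fun h => hAB (by rw [h]))
  rw [← hGc] at hbig
  obtain ⟨U, hUn, hUc, hU⟩ := stability (n := n) (k := k) (s := s) hs (by omega) hn _ G le_rfl
    hGk hno hbig
  have hmap : (Finset.univ.filter (fun x : Fin n => (x : ℕ) ∈ U)).map Fin.valEmbedding = U := by
    ext x
    simp only [Finset.mem_map, Finset.mem_filter, Finset.mem_univ, true_and]
    constructor
    · rintro ⟨y, hy, rfl⟩; exact hy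
    · intro hx
      exact ⟨⟨x, Finset.mem_range.1 (hUn hx)⟩, hx, rfl⟩
  obtain ⟨T, hT, hTd⟩ := cover_deg (s := s) (t := t) (by omega) F hcard
    (Finset.univ.filter (fun x : Fin n => (x : ℕ) ∈ U))
    (by rw [← Finset.card_map Fin.valEmbedding, hmap, hUc])
    (by
      intro A hA hd
      apply hU (A.map Fin.valEmbedding) (Finset.mem_image_of_mem _ hA)
      rw [← hmap, Finset.disjoint_map]
      exact hd)
  have := hcon T hT
  omega
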